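/- Let Ω ⊂ ℝ² be a bounded, open, connected set with Lipschitz boundary and let u ∈ W^{1,1}(Ω;S¹). Then for every Borel set E ⊆ Ω one has 𝒜**(u,E) = ∫_E √(1 + |∇u|²) dx; in particular, E ↦ 𝒜**(u,E) is a Borel measure on Ω absolutely continuous with respect to Lebesgue measure. -/

import Mathlib

open MeasureTheory Metric Filter Set
open scoped ENNReal NNReal Topology Classical

noncomputable section

abbrev R2 := EuclideanSpace ℝ (Fin 2)

/-- `Ω ⊂ ℝ²` has Lipschitz boundary: near every boundary point, after a rigid motion,
`Ω` coincides with the open region strictly above the graph of a Lipschitz function. -/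
def HasLipschitzBoundary (Ω : Set R2) : Prop :=
  ∀ p ∈ frontier Ω, ∃ r : ℝ, 0 < r ∧ ∃ (f : R2 ≃ᵢ R2) (γ : ℝ → ℝ) (L : ℝ≥0),
    LipschitzWith L γ ∧ ∀ x ∈ Metric.ball p r, (x ∈ Ω ↔ γ (f x 0) < f x 1)

/-- `G` is the weak (distributional) gradient of `u` on `Ω`:
`∫_Ω u_i ∂_j φ = -∫_Ω G_{ij} φ` for all test functions `φ ∈ C_c^∞(Ω)`. -/
def IsWeakGradient (Ω : Set R2) (u : R2 → R2) (G : R2 → Matrix (Fin 2) (Fin 2) ℝ) : Prop :=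
  ∀ φ : R2 → ℝ, ContDiff ℝ (⊤ : ℕ∞) φ → HasCompactSupport φ → tsupport φ ⊆ Ω →
    ∀ i j : Fin 2,
      (∫ x in Ω, u x i * fderiv ℝ φ x (EuclideanSpace.single j 1)) =
        - ∫ x in Ω, G x i j * φ x

/-- `u ∈ W^{1,1}(Ω;ℝ²)` with weak gradient `G`. -/
def MemW11 (Ω : Set R2) (u : R2 → R2) (G : R2 → Matrix (Fin 2) (Fin 2) ℝ) : Prop :=
  IntegrableOn u Ω ∧ (∀ i j : Fin 2, IntegrableOn (fun x => G x i j) Ω) ∧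
    IsWeakGradient Ω u G

/-- `|u| = 1` a.e. in `Ω`. -/
def SphereValued (Ω : Set R2) (u : R2 → R2) : Prop :=
  ∀ᵐ x ∂(volume.restrict Ω), ‖u x‖ = 1

/-- Frobenius norm of a `2×2` matrix. -/
def frob (M : Matrix (Fin 2) (Fin 2) ℝ) : ℝ :=
  Real.sqrt (∑ i, ∑ j, (M i j) ^ 2)

/-- Jacobian matrix of a map `v : ℝ² → ℝ²`. -/
def jacobianMatrix (v : R2 → R2) (x : R2) : Matrix (Fin 2) (Fin 2) ℝ :=
  Matrix.of fun i j => fderiv ℝ v x (EuclideanSpace.single j 1) i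

/-- Classical graph area `A(v,A) = ∫_A √(1 + |∇v|² + (Jv)²)` of a `C¹` map. -/
def classicalArea (A : Set R2) (v : R2 → R2) : ℝ≥0∞ :=
  ∫⁻ x in A, ENNReal.ofReal
    (Real.sqrt (1 + (∑ i, ∑ j, (jacobianMatrix v x i j) ^ 2) + (jacobianMatrix v x).det ^ 2))

/-- `L¹`-relaxed area functional `𝒜(u,A)`. -/
def relaxedArea (u : R2 → R2) (A : Set R2) : ℝ≥0∞ :=
  sInf { a : ℝ≥0∞ | ∃ v : ℕ → R2 → R2,
    (∀ k, ContDiffOn ℝ 1 (v k) A) ∧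
    (∀ k, IntegrableOn (fun x => v k x - u x) A) ∧
    Tendsto (fun k => ∫ x in A, ‖v k x - u x‖) atTop (nhds 0) ∧
    a = Filter.liminf (fun k => classicalArea A (v k)) atTop }

/-- `λ_u = (1/2)(u₁ ∇^⊥u₂ − u₂ ∇^⊥u₁)`, computed from the weak gradient `G`. -/
def lambdaVec (u : R2 → R2) (G : R2 → Matrix (Fin 2) (Fin 2) ℝ) (x : R2) : Fin 2 → ℝ :=
  ![ (1 / 2) * (-(u x 0) * G x 1 1 + u x 1 * G x 0 1),
     (1 / 2) * (u x 0 * G x 1 0 - u x 1 * G x 0 0) ]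

/-- Distributional Jacobian pairing `⟨Det(∇u), φ⟩ = ∫_Ω λ_u · ∇φ`. -/
def detPairing (Ω : Set R2) (u : R2 → R2) (G : R2 → Matrix (Fin 2) (Fin 2) ℝ)
    (φ : R2 → ℝ) : ℝ :=
  ∫ x in Ω, ∑ j, lambdaVec u G x j * fderiv ℝ φ x (EuclideanSpace.single j 1)

/-- `φ ∈ Lip₀(Ω)`: Lipschitz on `cl(Ω)` and vanishing on `∂Ω`. -/
def MemLip0 (Ω : Set R2) (φ : R2 → ℝ) : Prop :=
  (∃ L : ℝ≥0, LipschitzOnWith L φ (closure Ω)) ∧ ∀ p ∈ frontier Ω, φ p = 0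

/-- Admissible test functions for the flat norm: Lipschitz constant `≤ L` on `cl(Ω)`,
vanishing on `Z`, and bounded by `1` on `cl(Ω)`. -/
def FlatAdmissible (Ω Z : Set R2) (L : ℝ≥0) (φ : R2 → ℝ) : Prop :=
  LipschitzOnWith L φ (closure Ω) ∧ (∀ p ∈ Z, φ p = 0) ∧ ∀ p ∈ closure Ω, |φ p| ≤ 1

/-- Flat norm of a functional `F`, with vanishing condition on the set `Z`. -/
def flatNormOn (Ω Z : Set R2) (L : ℝ≥0) (F : (R2 → ℝ) → ℝ) : ℝ≥0∞ :=
  ⨆ φ ∈ {φ : R2 → ℝ | FlatAdmissible Ω Z L φ}, ENNReal.ofReal (F φ)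

/-- Flat norm of a functional `F` on `Lip₀(Ω)`; `L = 2` gives `‖·‖_{flat,α}` (α = 1/2),
`L = 1` gives `‖·‖_flat`. -/
def flatNorm (Ω : Set R2) (L : ℝ≥0) (F : (R2 → ℝ) → ℝ) : ℝ≥0∞ :=
  flatNormOn Ω (frontier Ω) L F

/-- `d̄_Ω(x,y) = min{|x−y|, dist(x,∂Ω) + dist(y,∂Ω)}`. -/
def dbar (Ω : Set R2) (x y : R2) : ℝ :=
  min (dist x y) (Metric.infDist x (frontier Ω) + Metric.infDist y (frontier Ω))

/-- Countably subadditive interior envelope `𝒜**(u,V)` (relative to `Ω`). -/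
def envA (u : R2 → R2) (Ω V : Set R2) : ℝ≥0∞ :=
  sInf { a : ℝ≥0∞ | ∃ A : ℕ → Set R2,
    (∀ k, IsOpen (A k) ∧ A k ⊆ Ω) ∧ V ⊆ ⋃ k, A k ∧ a = ∑' k, relaxedArea u (A k) }

/-- Property `(P_f)` for a finite family of pairs of points of `cl(Ω)`. -/
def SatisfiesPf (Ω : Set R2) {n : ℕ} (x y : Fin n → R2) : Prop :=
  (∀ k, (x k ∈ Ω ∧ y k ∈ frontier Ω ∧ dist (x k) (y k) = Metric.infDist (x k) (frontier Ω)) ∨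
        (y k ∈ Ω ∧ x k ∈ frontier Ω ∧ dist (x k) (y k) = Metric.infDist (y k) (frontier Ω))) ∧
  ∀ i j, x i ∈ Ω → y j ∈ Ω → x i ≠ y j

/-- The points of the family `x, y` lying in `Ω` are distinct and three by three
not collinear. -/
def InteriorPointsGeneric (Ω : Set R2) {n : ℕ} (x y : Fin n → R2) : Prop :=
  (∀ a b : Fin n ⊕ Fin n, Sum.elim x y a ∈ Ω → Sum.elim x y b ∈ Ω → a ≠ b →
    Sum.elim x y a ≠ Sum.elim x y b) ∧
  ∀ a b c : Fin n ⊕ Fin n, Sum.elim x y a ∈ Ω → Sum.elim x y b ∈ Ω → Sum.elim x y c ∈ Ω →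
    a ≠ b → a ≠ c → b ≠ c →
    ¬ Collinear ℝ ({Sum.elim x y a, Sum.elim x y b, Sum.elim x y c} : Set R2)

/-- `ι(w₁,w₂) = (w₁,−w₂)`. -/
def conjPt (w : R2) : R2 := (WithLp.equiv 2 (Fin 2 → ℝ)).symm ![w 0, -(w 1)]

/-- `u` is a (positive/negative) vortex around the points of the family lying in `Ω`:
the closed discs of radii `ρ` are contained in `Ω` and pairwise disjoint,
`u(z) = (z−x_i)/|z−x_i|` on `B_{ρ}(x_i)` and `u(z) = ι((z−y_j)/|z−y_j|)` on `B_{ρ}(y_j)`. -/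
def VortexAt (Ω : Set R2) (u : R2 → R2) {n : ℕ} (x y : Fin n → R2)
    (ρ : Fin n ⊕ Fin n → ℝ) : Prop :=
  (∀ a, Sum.elim x y a ∈ Ω → Metric.closedBall (Sum.elim x y a) (ρ a) ⊆ Ω) ∧
  (∀ a b, a ≠ b → Sum.elim x y a ∈ Ω → Sum.elim x y b ∈ Ω →
    Disjoint (Metric.closedBall (Sum.elim x y a) (ρ a))
      (Metric.closedBall (Sum.elim x y b) (ρ b))) ∧
  (∀ i, x i ∈ Ω → ∀ᵐ z ∂(volume.restrict (Metric.ball (x i) (ρ (Sum.inl i)))),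
    u z = ‖z - x i‖⁻¹ • (z - x i)) ∧
  (∀ i, y i ∈ Ω → ∀ᵐ z ∂(volume.restrict (Metric.ball (y i) (ρ (Sum.inr i)))),
    u z = conjPt (‖z - y i‖⁻¹ • (z - y i)))

/-- The energy `E(I_P, I_D, τ)` of a partition `{I_Dᶜ, I_D}` of `I` and an injection
`τ : I_D → I`. -/
def energy (Ω : Set R2) {n : ℕ} (x y : Fin n → R2) (ID : Finset (Fin n))
    (τ : Fin n → Fin n) : ℝ≥0∞ :=
  ((IDᶜ.filter fun k => x k ∈ Ω).card : ℝ≥0∞) +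
  (((Finset.univ \ ID.image τ).filter fun j => y j ∈ Ω).card : ℝ≥0∞) +
  2 * ∑ k ∈ ID, μH[1] (segment ℝ (y (τ k)) (x k) ∩ Ω)

/-!
Let `ν = √(1 + |∇u|²) dx` on `Ω`.

Since `√(1 + |M|²)` is the norm of the vector `(1, M)`, the measure `ν` is a supremum of pairings
with smooth test fields `φ`. Integrating by parts, the pairing of `φ` with `(1, ∇v)` is continuous
in `v` for the `L¹` distance, and it is at most the area of `v`. Hence `ν(A) ≤ 𝒜(u, A)` for open
`A`, and `ν(E) ≤ 𝒜**(u, E)` because `ν` is countably subadditive.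

For the converse, an `S¹`-valued `C¹` map has zero Jacobian determinant, so `exp(iθ)` has area
density `√(1 + |∇θ|²)`. Take for `θ` a branch of the argument, cut off at distance `δ` from its
slit, composed with a mollification of `u`. The resulting maps have area at most
`ν(A) + K ν(A ∩ {u is δ-close to the slit})` in the limit, with `K = O(1 / δ)`. Among `O(1 / δ)`
possible slits in an arc, one is met by `u` on a set of `ν`-measure `O(δ)` times that of the
preimage of the arc, so `𝒜(u, A) ≤ ν(A) + C ν(A ∩ {u lies in the arc})`. If `u` avoids the arc
on `E`, letting the open set `A` shrink to `E` removes the error term. Every Borel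
set splits into two pieces, on each of which `u` avoids one of two opposite arcs.
-/

section DominatedConvergence

variable {α : Type*} [MeasurableSpace α] {μ : Measure α}

lemma tendsto_lintegral_min_of_tendsto {f : ℕ → α → ℝ≥0∞} {f' g : α → ℝ≥0∞}
    (hf : ∀ k, AEMeasurable (f k) μ) (hg : AEMeasurable g μ) (hg_fin : ∫⁻ x, g x ∂μ ≠ ⊤)
    (hle : f' ≤ᵐ[μ] g) (hlim : ∀ᵐ x ∂μ, Tendsto (fun k => f k x) atTop (𝓝 (f' x))) :
    Tendsto (fun k => ∫⁻ x, min (f k x) (g x) ∂μ) atTop (𝓝 (∫⁻ x, f' x ∂μ)) := by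
  refine tendsto_lintegral_of_dominated_convergence' g (fun k => (hf k).min hg)
    (fun k => Eventually.of_forall fun x => min_le_right _ _) hg_fin ?_
  filter_upwards [hlim, hle] with x hx hx_le
  simpa only [min_eq_left hx_le] using hx.min (tendsto_const_nhds (x := g x))

lemma tendsto_lintegral_tsub_of_tendsto_lintegral {g : ℕ → α → ℝ≥0∞} {g' : α → ℝ≥0∞}
    (hg : ∀ k, AEMeasurable (g k) μ) (hg'_fin : ∫⁻ x, g' x ∂μ ≠ ⊤)
    (hlim : ∀ᵐ x ∂μ, Tendsto (fun k => g k x) atTop (𝓝 (g' x)))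
    (hint : Tendsto (fun k => ∫⁻ x, g k x ∂μ) atTop (𝓝 (∫⁻ x, g' x ∂μ))) :
    Tendsto (fun k => ∫⁻ x, (g k x - g' x) ∂μ) atTop (𝓝 0) := by
  have hg' : AEMeasurable g' μ := aemeasurable_of_tendsto_metrizable_ae' hg hlim
  have hmin := tendsto_lintegral_min_of_tendsto hg hg' hg'_fin EventuallyLE.rfl hlim
  have hsub := ENNReal.Tendsto.sub hint hmin (.inl hg'_fin)
  rw [tsub_self] at hsub
  refine hsub.congr fun k => ?_
  have hmin_fin : ∫⁻ x, min (g k x) (g' x) ∂μ ≠ ⊤ :=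
    ((lintegral_mono fun x => min_le_right _ _).trans_lt hg'_fin.lt_top).ne
  rw [← lintegral_sub' ((hg k).min hg') hmin_fin
    (Eventually.of_forall fun x => min_le_left (g k x) (g' x))]
  refine lintegral_congr fun x => ?_
  rcases le_total (g k x) (g' x) with h | h
  · rw [min_eq_left h, tsub_self, tsub_eq_zero_of_le h]
  · rw [min_eq_right h]

/- Pratt's form of dominated convergence: `f k` is dominated by `min (f k) g' + (g k - g')`, where
the first term has the fixed bound `g'` and the second tends to zero in `L¹`. -/
lemma tendsto_lintegral_of_dominated_of_tendsto_lintegral {f g : ℕ → α → ℝ≥0∞}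
    {f' g' : α → ℝ≥0∞} (hf : ∀ k, AEMeasurable (f k) μ) (hg : ∀ k, AEMeasurable (g k) μ)
    (hg'_fin : ∫⁻ x, g' x ∂μ ≠ ⊤) (hle : ∀ k, f k ≤ᵐ[μ] g k)
    (hflim : ∀ᵐ x ∂μ, Tendsto (fun k => f k x) atTop (𝓝 (f' x)))
    (hglim : ∀ᵐ x ∂μ, Tendsto (fun k => g k x) atTop (𝓝 (g' x)))
    (hint : Tendsto (fun k => ∫⁻ x, g k x ∂μ) atTop (𝓝 (∫⁻ x, g' x ∂μ))) :
    Tendsto (fun k => ∫⁻ x, f k x ∂μ) atTop (𝓝 (∫⁻ x, f' x ∂μ)) := by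
  have hg' : AEMeasurable g' μ := aemeasurable_of_tendsto_metrizable_ae' hg hglim
  have hle' : f' ≤ᵐ[μ] g' := by
    filter_upwards [hflim, hglim, ae_all_iff.2 hle] with x hfx hgx hx
    exact le_of_tendsto_of_tendsto' hfx hgx hx
  have hmin := tendsto_lintegral_min_of_tendsto hf hg' hg'_fin hle' hflim
  have hupper := hmin.add (tendsto_lintegral_tsub_of_tendsto_lintegral hg hg'_fin hglim hint)
  rw [add_zero] at hupper
  refine tendsto_of_tendsto_of_tendsto_of_le_of_le hmin hupper
    (fun k => lintegral_mono fun x => min_le_left _ _) fun k => ?_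
  rw [← lintegral_add_left' ((hf k).min hg')]
  refine lintegral_mono_ae ?_
  filter_upwards [hle k] with x hx
  rcases le_total (f k x) (g' x) with h | h
  · rw [min_eq_left h]
    exact le_self_add
  · rw [min_eq_right h]
    exact hx.trans le_add_tsub

end DominatedConvergence

section Mollify

open ContinuousLinearMap Convolution

variable {E : Type*} [NormedAddCommGroup E]

/-- Bumps with radii `1 / (2 (k + 1)) < 1 / (k + 1)`, used as a standard sequence of mollifiers. -/
def standardBump (k : ℕ) : ContDiffBump (0 : E) where
  rIn := 1 / (2 * ((k : ℝ) + 1))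
  rOut := 1 / ((k : ℝ) + 1)
  rIn_pos := by positivity
  rIn_lt_rOut := by
    have : (0 : ℝ) < (k : ℝ) + 1 := by positivity
    exact one_div_lt_one_div_of_lt this (by linarith)

lemma tendsto_standardBump_rOut : Tendsto (fun k => (standardBump k : ContDiffBump (0 : E)).rOut)
    atTop (𝓝 0) :=
  tendsto_one_div_add_atTop_nhds_zero_nat

variable {F : Type*} [NormedSpace ℝ E] [FiniteDimensional ℝ E] [MeasurableSpace E] [BorelSpace E]
  [NormedAddCommGroup F] [NormedSpace ℝ F] {μ : Measure E} [μ.IsAddHaarMeasure]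
  {g : E → F}

/-- The mollification `ρ ⋆ g` of `g`, where `ρ` is the bump `φ` normalised to have integral one. -/
def mollify (φ : ContDiffBump (0 : E)) (μ : Measure E) (g : E → F) : E → F :=
  φ.normed μ ⋆[lsmul ℝ ℝ, μ] g

namespace mollify

variable (φ : ContDiffBump (0 : E))

lemma apply_eq_integral (x : E) : mollify φ μ g x = ∫ t, φ.normed μ (x - t) • g t ∂μ :=
  convolution_lsmul_swap

lemma contDiff (hg : LocallyIntegrable g μ) {n : ℕ∞} :
    ContDiff ℝ n (mollify φ μ g) :=
  φ.hasCompactSupport_normed.contDiff_convolution_left _ φ.contDiff_normed hg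

lemma integrable (hg : Integrable g μ) : Integrable (mollify φ μ g) μ :=
  φ.integrable_normed.integrable_convolution _ hg

lemma norm_le (x : E) : ‖mollify φ μ g x‖ ≤ mollify φ μ (fun y => ‖g y‖) x := by
  simp only [apply_eq_integral]
  refine (norm_integral_le_integral_norm _).trans_eq (integral_congr_ae ?_)
  exact Eventually.of_forall fun t => by
    simp only [norm_smul, smul_eq_mul, Real.norm_of_nonneg (φ.nonneg_normed _)]

lemma norm_le_of_forall_norm_le {C : ℝ} (hC : ∀ x, ‖g x‖ ≤ C) (x : E) :
    ‖mollify φ μ g x‖ ≤ C := by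
  have hφ : Integrable (fun t => φ.normed μ (x - t)) μ := φ.integrable_normed.comp_sub_left x
  calc ‖mollify φ μ g x‖ = ‖∫ t, φ.normed μ (x - t) • g t ∂μ‖ := by rw [apply_eq_integral]
    _ ≤ ∫ t, φ.normed μ (x - t) * C ∂μ := by
        refine norm_integral_le_of_norm_le (hφ.mul_const C) (Eventually.of_forall fun t => ?_)
        rw [norm_smul, Real.norm_of_nonneg (φ.nonneg_normed _)]
        exact mul_le_mul_of_nonneg_left (hC t) (φ.nonneg_normed _)
    _ = C := by
        rw [integral_mul_const, integral_sub_left_eq_self (φ.normed μ), φ.integral_normed, one_mul]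

lemma integral_eq [CompleteSpace F] (hg : Integrable g μ) :
    ∫ x, mollify φ μ g x ∂μ = ∫ x, g x ∂μ := by
  rw [mollify, integral_convolution _ φ.integrable_normed hg, φ.integral_normed]
  simp only [lsmul_apply, one_smul]

lemma fderiv_apply_eq_integral (hg : LocallyIntegrable g μ) (x e : E) :
    fderiv ℝ (mollify φ μ g) x e = ∫ t, fderiv ℝ (φ.normed μ) (x - t) e • g t ∂μ := by
  have hφ : ContDiff ℝ 1 (φ.normed μ) := φ.contDiff_normed
  have hint := ((φ.hasCompactSupport_normed.fderiv (𝕜 := ℝ)).convolutionExists_left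
    ((lsmul ℝ ℝ : ℝ →L[ℝ] F →L[ℝ] F).precompL E) (hφ.continuous_fderiv one_ne_zero)
    hg x).integrable_swap
  rw [mollify, (φ.hasCompactSupport_normed.hasFDerivAt_convolution_left _ hφ hg x).fderiv,
    convolution_eq_swap, ContinuousLinearMap.integral_apply hint]
  rfl

lemma support_subset : Function.support (mollify φ μ g) ⊆
    cthickening φ.rOut (Function.support g) := by
  refine (support_convolution_subset _).trans ?_
  rintro _ ⟨s, hs, t, ht, rfl⟩
  rw [φ.support_normed_eq, mem_ball_zero_iff] at hs
  exact mem_cthickening_of_dist_le _ t _ _ ht (by simpa [dist_eq_norm] using hs.le)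

end mollify

lemma ae_tendsto_mollify_standardBump [CompleteSpace F] (hg : LocallyIntegrable g μ) :
    ∀ᵐ x ∂μ, Tendsto (fun k => mollify (standardBump k) μ g x) atTop (𝓝 (g x)) := by
  refine ContDiffBump.ae_convolution_tendsto_right_of_locallyIntegrable (K := 2)
    tendsto_standardBump_rOut (Eventually.of_forall fun k => le_of_eq ?_) hg
  simp only [standardBump]
  field_simp

lemma mollify.lintegral_norm_eq (φ : ContDiffBump (0 : E)) (hg : Integrable g μ) :
    ∫⁻ x, ENNReal.ofReal (mollify φ μ (fun y => ‖g y‖) x) ∂μ = ∫⁻ x, ‖g x‖ₑ ∂μ := by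
  have hnonneg (x : E) : 0 ≤ mollify φ μ (fun y => ‖g y‖) x :=
    (norm_nonneg _).trans (mollify.norm_le (g := g) φ x)
  rw [← ofReal_integral_eq_lintegral_ofReal (mollify.integrable _ hg.norm)
    (Eventually.of_forall hnonneg), mollify.integral_eq _ hg.norm,
    ofReal_integral_norm_eq_lintegral_enorm hg]

lemma lintegral_indicator_one_add_mul_sum {α ι : Type*} [MeasurableSpace α] {μ : Measure α}
    [Fintype ι] {A : Set α} (hA : MeasurableSet A) {L : ℝ≥0∞} {g : ι → α → ℝ≥0∞}
    (hg : ∀ j, AEMeasurable (g j) μ) :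
    ∫⁻ x, (A.indicator 1 x + L * ∑ j, g j x) ∂μ = μ A + L * ∑ j, ∫⁻ x, g j x ∂μ := by
  rw [lintegral_add_left (measurable_one.indicator hA), lintegral_indicator_one hA,
    lintegral_const_mul'' _ (Finset.aemeasurable_fun_sum _ fun j _ => hg j),
    lintegral_finsetSum' _ fun j _ => hg j]

/- Pratt's theorem applies because the integral of the mollification of a norm does not depend on
the mollification parameter. -/
lemma tendsto_setLIntegral_of_le_mollify_norm {ι : Type*} [Fintype ι] {c : ι → E → F}
    (hc : ∀ j, Integrable (c j) μ) {A : Set E} (hA : MeasurableSet A) (hA_fin : μ A ≠ ⊤)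
    {L : ℝ≥0∞} (hL : L ≠ ⊤) {f : ℕ → E → ℝ≥0∞} {f' : E → ℝ≥0∞}
    (hf : ∀ k, AEMeasurable (f k) (μ.restrict A))
    (hle : ∀ k, ∀ x ∈ A, f k x ≤ 1 + L * ∑ j,
      ENNReal.ofReal (mollify (standardBump k) μ (fun y => ‖c j y‖) x))
    (hlim : ∀ᵐ x ∂μ, x ∈ A → Tendsto (fun k => f k x) atTop (𝓝 (f' x))) :
    Tendsto (fun k => ∫⁻ x in A, f k x ∂μ) atTop (𝓝 (∫⁻ x in A, f' x ∂μ)) := by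
  set m : ℕ → ι → E → ℝ≥0∞ := fun k j x =>
    ENNReal.ofReal (mollify (standardBump k) μ (fun y => ‖c j y‖) x)
  have hm_meas (k : ℕ) (j : ι) : AEMeasurable (m k j) μ :=
    (mollify.integrable _ (hc j).norm).1.aemeasurable.ennreal_ofReal
  simp only [← lintegral_indicator hA]
  refine tendsto_lintegral_of_dominated_of_tendsto_lintegral
    (g := fun k x => A.indicator 1 x + L * ∑ j, m k j x)
    (g' := fun x => A.indicator 1 x + L * ∑ j, ‖c j x‖ₑ)
    (fun k => (aemeasurable_indicator_iff hA).2 (hf k))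
    (fun k => (measurable_one.indicator hA).aemeasurable.add
      ((Finset.aemeasurable_fun_sum _ fun j _ => hm_meas k j).const_mul L))
    ?fin (fun k => Eventually.of_forall fun x => ?le) ?lim_f ?lim_g ?int
  case fin =>
    rw [lintegral_indicator_one_add_mul_sum hA fun j => (hc j).1.enorm]
    exact ENNReal.add_ne_top.2 ⟨hA_fin, ENNReal.mul_ne_top hL
      (ENNReal.sum_ne_top.2 fun j _ => (hc j).2.ne)⟩
  case le =>
    by_cases hx : x ∈ A
    · simpa only [indicator_of_mem hx, Pi.one_apply] using hle k x hx
    · simp only [indicator_of_notMem hx, zero_le]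
  case lim_f =>
    filter_upwards [hlim] with x hx
    by_cases hxA : x ∈ A
    · simpa only [indicator_of_mem hxA] using hx hxA
    · simpa only [indicator_of_notMem hxA] using tendsto_const_nhds
  case lim_g =>
    filter_upwards [ae_all_iff.2 fun j =>
      ae_tendsto_mollify_standardBump (hc j).norm.locallyIntegrable] with x hx
    refine tendsto_const_nhds.add (ENNReal.Tendsto.const_mul (tendsto_finsetSum _ fun j _ => ?_)
      (Or.inr hL))
    rw [← ofReal_norm]
    exact ENNReal.tendsto_ofReal (hx j)
  case int =>
    rw [lintegral_indicator_one_add_mul_sum hA fun j => (hc j).1.enorm]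
    simp only [lintegral_indicator_one_add_mul_sum hA (hm_meas _), m,
      mollify.lintegral_norm_eq _ (hc _)]
    exact tendsto_const_nhds

end Mollify

/-- The `j`-th column of a matrix as a Euclidean vector: for a gradient, the partial derivative
in direction `j`. -/
def column (M : Matrix (Fin 2) (Fin 2) ℝ) (j : Fin 2) : R2 := WithLp.toLp 2 (M.col j)

@[simp] lemma column_apply (M : Matrix (Fin 2) (Fin 2) ℝ) (i j : Fin 2) : column M j i = M i j :=
  rfl

section WeakGradient

variable {Ω A : Set R2} {u v : R2 → R2} {G : R2 → Matrix (Fin 2) (Fin 2) ℝ}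

lemma isWeakGradient_iff_integral : IsWeakGradient Ω u G ↔
    ∀ φ : R2 → ℝ, ContDiff ℝ (⊤ : ℕ∞) φ → HasCompactSupport φ → tsupport φ ⊆ Ω → ∀ i j : Fin 2,
      ∫ x, u x i * fderiv ℝ φ x (EuclideanSpace.single j 1) = -∫ x, G x i j * φ x := by
  unfold IsWeakGradient
  refine forall₃_congr fun φ _ _ => forall₃_congr fun hφΩ i j => ?_
  have hφ_zero : ∀ x, x ∉ Ω → φ x = 0 := fun x hx =>
    image_eq_zero_of_notMem_tsupport fun h => hx (hφΩ h)
  have hderiv_zero : ∀ x, x ∉ Ω → fderiv ℝ φ x = 0 := fun x hx =>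
    fderiv_of_notMem_tsupport ℝ fun h => hx (hφΩ h)
  rw [setIntegral_eq_integral_of_forall_compl_eq_zero fun x hx => by
      rw [hderiv_zero x hx, zero_apply, mul_zero],
    setIntegral_eq_integral_of_forall_compl_eq_zero fun x hx => by rw [hφ_zero x hx, mul_zero]]

lemma IsWeakGradient.mono (h : IsWeakGradient Ω u G) (hA : A ⊆ Ω) : IsWeakGradient A u G :=
  isWeakGradient_iff_integral.2 fun φ hφ hφc hφA =>
    isWeakGradient_iff_integral.1 h φ hφ hφc (hφA.trans hA)

lemma IsWeakGradient.congr (h : IsWeakGradient Ω u G) (huv : u =ᵐ[volume.restrict Ω] v) :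
    IsWeakGradient Ω v G := by
  intro φ hφ hφc hφΩ i j
  rw [← h φ hφ hφc hφΩ i j]
  exact integral_congr_ae (huv.mono fun x hx => by simp only [hx])

lemma MemW11.mono (h : MemW11 Ω u G) (hA : A ⊆ Ω) : MemW11 A u G :=
  ⟨h.1.mono_set hA, fun i j => (h.2.1 i j).mono_set hA, h.2.2.mono hA⟩

lemma MemW11.congr (h : MemW11 Ω u G) (huv : u =ᵐ[volume.restrict Ω] v) : MemW11 Ω v G :=
  ⟨h.1.congr_fun_ae huv, h.2.1, h.2.2.congr huv⟩

lemma MemW11.integrableOn_column (h : MemW11 Ω u G) (j : Fin 2) :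
    IntegrableOn (fun x => column (G x) j) Ω :=
  Integrable.of_eval_piLp fun i => h.2.1 i j

lemma MemW11.setIntegral_fderiv_smul (h : MemW11 Ω u G) {φ : R2 → ℝ}
    (hφ : ContDiff ℝ (⊤ : ℕ∞) φ) (hφc : HasCompactSupport φ) (hφΩ : tsupport φ ⊆ Ω) (j : Fin 2) :
    ∫ x in Ω, fderiv ℝ φ x (EuclideanSpace.single j 1) • u x =
      -∫ x in Ω, φ x • column (G x) j := by
  have hderiv : IntegrableOn (fun x => fderiv ℝ φ x (EuclideanSpace.single j 1) • u x) Ω :=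
    h.1.locallyIntegrable.integrable_smul_left_of_hasCompactSupport
      ((hφ.continuous_fderiv (by simp)).clm_apply continuous_const) (hφc.fderiv_apply ℝ _)
  have hval : IntegrableOn (fun x => φ x • column (G x) j) Ω :=
    (h.integrableOn_column j).locallyIntegrable.integrable_smul_left_of_hasCompactSupport
      hφ.continuous hφc
  ext i
  rw [PiLp.neg_apply, eval_integral_piLp hderiv.eval_piLp, eval_integral_piLp hval.eval_piLp]
  simpa only [PiLp.smul_apply, smul_eq_mul, column_apply, mul_comm] using h.2.2 φ hφ hφc hφΩ i j

lemma MemW11.fderiv_mollify_indicator (h : MemW11 Ω u G) (hΩ : IsOpen Ω)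
    (φ : ContDiffBump (0 : R2)) {x : R2} (hx : closedBall x φ.rOut ⊆ Ω) (j : Fin 2) :
    fderiv ℝ (mollify φ volume (Ω.indicator u)) x (EuclideanSpace.single j 1) =
      mollify φ volume (Ω.indicator fun y => column (G y) j) x := by
  have hsupp : tsupport (fun t => φ.normed volume (x - t)) ⊆ closedBall x φ.rOut := by
    refine closure_minimal (fun t ht => ?_) isClosed_closedBall
    have : x - t ∈ ball 0 φ.rOut := φ.support_normed_eq (μ := volume) ▸ ht
    rw [mem_closedBall', dist_eq_norm]
    exact (mem_ball_zero_iff.1 this).le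
  have hsmooth : ContDiff ℝ (⊤ : ℕ∞) fun t => φ.normed volume (x - t) :=
    φ.contDiff_normed.comp (contDiff_const.sub contDiff_id)
  have hweak := h.setIntegral_fderiv_smul hsmooth
    (HasCompactSupport.of_support_subset_isCompact (isCompact_closedBall x φ.rOut)
      (subset_closure.trans hsupp)) (hsupp.trans hx) j
  have hderiv (t : R2) : fderiv ℝ (fun s => φ.normed volume (x - s)) t
      = -fderiv ℝ (φ.normed volume) (x - t) := by
    have hφ : DifferentiableAt ℝ (φ.normed volume) (x - t) :=
      φ.contDiff_normed.differentiable one_ne_zero _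
    exact ((hφ.hasFDerivAt.comp t ((hasFDerivAt_id t).const_sub x)).congr_fderiv
      (by rw [ContinuousLinearMap.comp_neg, ContinuousLinearMap.comp_id])).fderiv
  simp only [hderiv, neg_apply, neg_smul, integral_neg, neg_inj] at hweak
  rw [mollify.fderiv_apply_eq_integral φ
    (h.1.integrable_indicator hΩ.measurableSet).locallyIntegrable, mollify.apply_eq_integral]
  simpa only [← integral_indicator hΩ.measurableSet, indicator_smul] using hweak

lemma integrable_mul_of_tsupport_subset (hA : IsOpen A) {φ f : R2 → ℝ} (hφ : Continuous φ)
    (hφc : HasCompactSupport φ) (hφA : tsupport φ ⊆ A) (hf : ContinuousOn f A) :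
    Integrable (fun x => f x * φ x) := by
  have hcont : Continuous fun x => f x * φ x := continuous_of_tsupport fun x hx =>
    (hf.continuousAt (hA.mem_nhds (hφA (tsupport_mul_subset_right hx)))).mul hφ.continuousAt
  exact hcont.integrable_of_hasCompactSupport hφc.mul_left

lemma continuousOn_jacobianMatrix (hA : IsOpen A) (hv : ContDiffOn ℝ 1 v A) (i j : Fin 2) :
    ContinuousOn (fun x => jacobianMatrix v x i j) A :=
  (EuclideanSpace.proj i : R2 →L[ℝ] ℝ).continuous.comp_continuousOn
    ((hv.continuousOn_fderiv_of_isOpen hA le_rfl).clm_apply continuousOn_const)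

lemma isWeakGradient_jacobianMatrix (hA : IsOpen A) (hv : ContDiffOn ℝ 1 v A) :
    IsWeakGradient A v (jacobianMatrix v) := by
  rw [isWeakGradient_iff_integral]
  intro φ hφ hφc hφA i j
  have hvd : ∀ x ∈ tsupport φ, HasFDerivAt (fun y => v y i)
      ((EuclideanSpace.proj i : R2 →L[ℝ] ℝ).comp (fderiv ℝ v x)) x := fun x hx =>
    (EuclideanSpace.proj i : R2 →L[ℝ] ℝ).hasFDerivAt.comp x
      ((hv.differentiableOn one_ne_zero).differentiableAt (hA.mem_nhds (hφA hx))).hasFDerivAt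
  have hv_cont : ContinuousOn (fun x => v x i) A :=
    (EuclideanSpace.proj i : R2 →L[ℝ] ℝ).continuous.comp_continuousOn hv.continuousOn
  have hjac : (fun x => jacobianMatrix v x i j * φ x) =
      fun x => fderiv ℝ (fun y => v y i) x (EuclideanSpace.single j 1) * φ x := by
    ext x
    by_cases hx : x ∈ tsupport φ
    · rw [(hvd x hx).fderiv]
      rfl
    · rw [image_eq_zero_of_notMem_tsupport hx, mul_zero, mul_zero]
  have hjac_int := integrable_mul_of_tsupport_subset hA hφ.continuous hφc hφA
    (continuousOn_jacobianMatrix hA hv i j)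
  rw [hjac] at hjac_int ⊢
  exact integral_mul_fderiv_eq_neg_fderiv_mul_of_integrable hjac_int
    (integrable_mul_of_tsupport_subset hA
      ((hφ.continuous_fderiv (by simp)).clm_apply continuous_const) (hφc.fderiv_apply ℝ _)
      ((tsupport_fderiv_apply_subset ℝ _).trans hφA) hv_cont)
    (integrable_mul_of_tsupport_subset hA hφ.continuous hφc hφA hv_cont)
    (fun x hx => (hvd x hx).differentiableAt) (fun x _ => hφ.differentiable (by simp) x)

end WeakGradient

section CutoffArg

open Complex
open scoped Real

lemma exists_abs_deriv_smoothTransition_le :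
    ∃ K : ℝ, 0 ≤ K ∧ ∀ t, |deriv Real.smoothTransition t| ≤ K := by
  have hcont : Continuous (deriv Real.smoothTransition) :=
    Real.smoothTransition.contDiff.continuous_deriv (n := 1) le_rfl
  obtain ⟨K, hK⟩ := isCompact_Icc.exists_bound_of_continuousOn (s := Icc 0 1) hcont.continuousOn
  have hK_nonneg : 0 ≤ K := (norm_nonneg _).trans (hK 0 (by simp))
  refine ⟨K, hK_nonneg, fun t => ?_⟩
  by_cases ht : t ∈ Icc (0 : ℝ) 1
  · exact hK t ht
  have hzero : deriv Real.smoothTransition t = 0 := by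
    rw [mem_Icc, not_and_or, not_le, not_le] at ht
    rcases ht with ht | ht
    · refine IsLocalMin.deriv_eq_zero (Eventually.of_forall fun s => ?_)
      rw [Real.smoothTransition.zero_of_nonpos ht.le]
      exact Real.smoothTransition.nonneg s
    · refine IsLocalMax.deriv_eq_zero (Eventually.of_forall fun s => ?_)
      rw [Real.smoothTransition.one_of_one_le ht.le]
      exact Real.smoothTransition.le_one s
  rwa [hzero, abs_zero]

/-- A smooth function that is nonpositive on the branch cut of `Complex.arg` and equals
`‖z + 1‖ ^ 2 / 2` on the unit circle; it measures how far `z` stays from the cut. -/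
def slitGap (z : ℂ) : ℝ := ‖z + 1‖ ^ 2 / 2 - (1 - ‖z‖ ^ 2) ^ 2

lemma contDiff_slitGap : ContDiff ℝ 1 slitGap := by
  unfold slitGap
  have h := contDiff_norm_sq ℝ (E := ℂ) (n := 1)
  exact ((h.comp (contDiff_id.add contDiff_const)).div_const 2).sub ((contDiff_const.sub h).pow 2)

lemma slitGap_nonpos {z : ℂ} (hz : z ∉ slitPlane) : slitGap z ≤ 0 := by
  rw [mem_slitPlane_iff, not_or, not_lt, not_not] at hz
  obtain ⟨hre, him⟩ := hz
  rw [slitGap, Complex.sq_norm, Complex.sq_norm, normSq_apply, normSq_apply]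
  simp only [add_re, add_im, one_re, one_im, him]
  nlinarith [mul_nonneg (sq_nonneg (z.re + 1)) (by nlinarith : 0 ≤ (1 - z.re) ^ 2 - 1 / 2)]

lemma slitGap_of_norm_eq_one {z : ℂ} (hz : ‖z‖ = 1) : slitGap z = ‖z + 1‖ ^ 2 / 2 := by
  simp [slitGap, hz]

lemma hasFDerivAt_slitGap {z : ℂ} (hz : ‖z‖ = 1) :
    HasFDerivAt slitGap (innerSL ℝ (z + 1)) z := by
  have hnum := ((hasFDerivAt_id z).add_const 1).norm_sq.mul_const (1 / 2 : ℝ)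
  have hden := ((hasFDerivAt_id z).norm_sq.const_sub 1).pow 2
  refine ((hnum.sub hden).congr_fderiv ?_).congr_of_eventuallyEq ?_
  · ext w
    simp [hz]
    ring
  · exact Eventually.of_forall fun w => by simp [slitGap, div_eq_mul_inv]

/-- The argument, smoothly cut off near its branch cut so that it becomes `C¹` on all of `ℂ`; on
the unit circle it is unchanged at distance at least `2 * δ` from `-1`. -/
def cutoffArg (δ : ℝ) (z : ℂ) : ℝ := Real.smoothTransition (slitGap z / δ ^ 2 - 1) * arg z

variable {δ : ℝ} {z : ℂ}

lemma hasFDerivAt_arg (hz : z ∈ slitPlane) :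
    HasFDerivAt arg (imCLM.comp (ContinuousLinearMap.mul ℝ ℂ z⁻¹)) z := by
  have hlog : HasFDerivAt log (ContinuousLinearMap.mul ℝ ℂ z⁻¹) z :=
    ((hasDerivAt_log hz).hasFDerivAt.restrictScalars ℝ).congr_fderiv
      (ContinuousLinearMap.ext fun w => by simp [mul_comm])
  exact (imCLM.hasFDerivAt.comp z hlog).congr_of_eventuallyEq
    (Eventually.of_forall fun w => (log_im w).symm)

lemma contDiffAt_arg (hz : z ∈ slitPlane) : ContDiffAt ℝ 1 arg z :=
  (imCLM.contDiff.contDiffAt.comp z ((contDiffAt_log hz).restrict_scalars ℝ)).congr_of_eventuallyEq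
    (Eventually.of_forall fun w => (log_im w).symm)

lemma norm_imCLM_comp_mul_inv_le (hz : ‖z‖ = 1) :
    ‖imCLM.comp (ContinuousLinearMap.mul ℝ ℂ z⁻¹)‖ ≤ 1 := by
  refine ContinuousLinearMap.opNorm_le_bound _ zero_le_one fun w => ?_
  calc ‖(z⁻¹ * w).im‖ ≤ ‖z⁻¹ * w‖ := abs_im_le_norm _
    _ = 1 * ‖w‖ := by rw [norm_mul, norm_inv, hz, inv_one]

lemma cutoffArg_eventuallyEq_zero (hδ : 0 < δ) (hz : z ∉ slitPlane) :
    cutoffArg δ =ᶠ[𝓝 z] fun _ => 0 := by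
  have hlt : ∀ᶠ w in 𝓝 z, slitGap w < δ ^ 2 :=
    contDiff_slitGap.continuous.continuousAt.eventually_lt_const
      ((slitGap_nonpos hz).trans_lt (by positivity))
  filter_upwards [hlt] with w hw
  have : slitGap w / δ ^ 2 ≤ 1 := (div_le_one (by positivity)).2 hw.le
  rw [cutoffArg, Real.smoothTransition.zero_of_nonpos (by linarith), zero_mul]

lemma contDiff_cutoffArg (hδ : 0 < δ) : ContDiff ℝ 1 (cutoffArg δ) := by
  refine contDiff_iff_contDiffAt.2 fun z => ?_
  by_cases hz : z ∈ slitPlane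
  · exact (Real.smoothTransition.contDiff.comp
      ((contDiff_slitGap.div_const _).sub contDiff_const)).contDiffAt.mul (contDiffAt_arg hz)
  · exact contDiffAt_const.congr_of_eventuallyEq (cutoffArg_eventuallyEq_zero hδ hz)

lemma one_le_slitGap_div_sub_one (hδ : 0 < δ) (hz : ‖z‖ = 1) (hzδ : 2 * δ ≤ ‖z + 1‖) :
    1 ≤ slitGap z / δ ^ 2 - 1 := by
  rw [slitGap_of_norm_eq_one hz, le_sub_iff_add_le, le_div_iff₀ (by positivity)]
  nlinarith

lemma cutoffArg_eq_arg (hδ : 0 < δ) (hz : ‖z‖ = 1) (hzδ : 2 * δ ≤ ‖z + 1‖) :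
    cutoffArg δ z = arg z := by
  rw [cutoffArg, Real.smoothTransition.one_of_one_le (one_le_slitGap_div_sub_one hδ hz hzδ),
    one_mul]

lemma norm_fderiv_cutoffArg_le_add (hδ : 0 < δ) (hz : ‖z‖ = 1) :
    ‖fderiv ℝ (cutoffArg δ) z‖ ≤
      1 + π * (|deriv Real.smoothTransition (slitGap z / δ ^ 2 - 1)| * (‖z + 1‖ / δ ^ 2)) := by
  by_cases hslit : z ∈ slitPlane
  swap
  · rw [(cutoffArg_eventuallyEq_zero hδ hslit).fderiv_eq, fderiv_const_apply, norm_zero]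
    positivity
  set t := slitGap z / δ ^ 2 - 1
  have hgap : HasFDerivAt (fun w => slitGap w / δ ^ 2 - 1)
      ((δ ^ 2)⁻¹ • innerSL ℝ (z + 1)) z := by
    simpa only [div_eq_mul_inv] using ((hasFDerivAt_slitGap hz).mul_const (δ ^ 2)⁻¹).sub_const 1
  have hstep : HasDerivAt Real.smoothTransition (deriv Real.smoothTransition t) t :=
    (Real.smoothTransition.contDiff.differentiable one_ne_zero t).hasDerivAt
  have hderiv := (hstep.comp_hasFDerivAt z hgap).mul (hasFDerivAt_arg hslit)
  rw [show fderiv ℝ (cutoffArg δ) z = _ from hderiv.fderiv]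
  refine (norm_add_le _ _).trans (add_le_add ?_ ?_)
  · rw [norm_smul, Function.comp_apply, Real.norm_of_nonneg (Real.smoothTransition.nonneg _)]
    exact mul_le_one₀ (Real.smoothTransition.le_one _) (norm_nonneg _)
      (norm_imCLM_comp_mul_inv_le hz)
  · rw [norm_smul, norm_smul, norm_smul, innerSL_apply_norm, Real.norm_eq_abs, Real.norm_eq_abs,
      Real.norm_of_nonneg (by positivity), ← div_eq_inv_mul]
    exact mul_le_mul_of_nonneg_right (abs_arg_le_pi z) (by positivity)

lemma norm_fderiv_cutoffArg_le_one (hδ : 0 < δ) (hz : ‖z‖ = 1) (hzδ : 2 * δ ≤ ‖z + 1‖) :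
    ‖fderiv ℝ (cutoffArg δ) z‖ ≤ 1 := by
  have hderiv : deriv Real.smoothTransition (slitGap z / δ ^ 2 - 1) = 0 := by
    refine IsLocalMax.deriv_eq_zero (Eventually.of_forall fun s => ?_)
    rw [Real.smoothTransition.one_of_one_le (one_le_slitGap_div_sub_one hδ hz hzδ)]
    exact Real.smoothTransition.le_one s
  simpa [hderiv] using norm_fderiv_cutoffArg_le_add hδ hz

lemma exists_norm_fderiv_cutoffArg_le : ∃ C : ℝ, 0 ≤ C ∧ ∀ δ : ℝ, 0 < δ → ∀ z : ℂ, ‖z‖ = 1 →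
    ‖fderiv ℝ (cutoffArg δ) z‖ ≤ 1 + C / δ := by
  obtain ⟨K, hK, hstep⟩ := exists_abs_deriv_smoothTransition_le
  refine ⟨π * (K * 2), by positivity, fun δ hδ z hz => ?_⟩
  rcases le_total (2 * δ) ‖z + 1‖ with hzδ | hzδ
  · exact (norm_fderiv_cutoffArg_le_one hδ hz hzδ).trans (le_add_of_nonneg_right (by positivity))
  · have hratio : ‖z + 1‖ / δ ^ 2 ≤ 2 / δ := by
      rw [div_le_div_iff₀ (by positivity) hδ]
      nlinarith
    calc ‖fderiv ℝ (cutoffArg δ) z‖ ≤ _ := norm_fderiv_cutoffArg_le_add hδ hz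
      _ ≤ 1 + π * (K * (2 / δ)) := by gcongr; exact hstep _
      _ = 1 + π * (K * 2) / δ := by ring

end CutoffArg

section CirclePoint

open scoped Real

/-- The point of `S¹ ⊂ ℝ²` with angle `t`. -/
def circlePoint (t : ℝ) : R2 := Complex.orthonormalBasisOneI.repr (Circle.exp t)

@[simp] lemma norm_circlePoint (t : ℝ) : ‖circlePoint t‖ = 1 := by
  rw [circlePoint, LinearIsometryEquiv.norm_map, Circle.norm_coe]

lemma contDiff_circlePoint : ContDiff ℝ 1 circlePoint := by
  have hexp : ContDiff ℝ 1 fun t : ℝ => (Circle.exp t : ℂ) := by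
    simp only [Circle.coe_exp]
    exact (Complex.ofRealCLM.contDiff.mul contDiff_const).cexp
  exact Complex.orthonormalBasisOneI.repr.contDiff.comp hexp

lemma exists_hasDerivAt_circlePoint (t : ℝ) :
    ∃ τ : R2, ‖τ‖ = 1 ∧ HasDerivAt circlePoint τ t := by
  have hexp : HasDerivAt (fun s : ℝ => (Circle.exp s : ℂ)) (Circle.exp t * Complex.I) t :=
    ((hasDerivAt_id t).ofReal_comp.mul_const Complex.I).cexp.congr_deriv (by simp)
  refine ⟨Complex.orthonormalBasisOneI.repr (Circle.exp t * Complex.I), ?_,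
    Complex.orthonormalBasisOneI.repr.toContinuousLinearEquiv.hasFDerivAt.comp_hasDerivAt t hexp⟩
  rw [LinearIsometryEquiv.norm_map, norm_mul, Circle.norm_coe, Complex.norm_I, one_mul]

lemma norm_circlePoint_sub (a b : ℝ) :
    ‖circlePoint a - circlePoint b‖ = ‖2 * Real.sin ((a - b) / 2)‖ := by
  have hexp : (Circle.exp a : ℂ) - Circle.exp b =
      Circle.exp b * (Complex.exp (Complex.I * (a - b : ℝ)) - 1) := by
    simp only [Circle.coe_exp, mul_sub, ← Complex.exp_add, mul_one]
    congr 2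
    push_cast
    ring
  rw [circlePoint, circlePoint, ← map_sub, LinearIsometryEquiv.norm_map, hexp, norm_mul,
    Circle.norm_coe, one_mul, Complex.norm_exp_I_mul_ofReal_sub_one]

lemma norm_circlePoint_sub_le (a b : ℝ) : ‖circlePoint a - circlePoint b‖ ≤ |a - b| := by
  rw [norm_circlePoint_sub, norm_mul, Real.norm_two, Real.norm_eq_abs]
  calc 2 * |Real.sin ((a - b) / 2)| ≤ 2 * |(a - b) / 2| :=
        mul_le_mul_of_nonneg_left Real.abs_sin_le_abs two_pos.le
    _ = |a - b| := by rw [abs_div, abs_two]; ring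

lemma half_abs_sub_le_norm_circlePoint_sub {a b : ℝ} (hab : |a - b| ≤ π) :
    |a - b| / 2 ≤ ‖circlePoint a - circlePoint b‖ := by
  have hjordan := Real.mul_abs_le_abs_sin (x := (a - b) / 2) (by rw [abs_div, abs_two]; linarith)
  rw [abs_div, abs_two] at hjordan
  rw [norm_circlePoint_sub, norm_mul, Real.norm_two, Real.norm_eq_abs]
  have hπ : 1 / 2 ≤ 2 / π := by
    rw [div_le_div_iff₀ two_pos Real.pi_pos]
    linarith [Real.pi_le_four]
  nlinarith [abs_nonneg (a - b)]

/- The determinant vanishes because the map takes values in a curve. -/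
lemma sum_sq_add_det_sq_jacobianMatrix_circlePoint {f : R2 → ℝ} {x : R2}
    (hf : DifferentiableAt ℝ f x) :
    (∑ i, ∑ j, jacobianMatrix (fun y => circlePoint (f y)) x i j ^ 2) +
        (jacobianMatrix (fun y => circlePoint (f y)) x).det ^ 2 =
      ∑ j, fderiv ℝ f x (EuclideanSpace.single j 1) ^ 2 := by
  obtain ⟨τ, hτ_norm, hτ⟩ := exists_hasDerivAt_circlePoint (f x)
  have hjac (i j : Fin 2) : jacobianMatrix (fun y => circlePoint (f y)) x i j =
      fderiv ℝ f x (EuclideanSpace.single j 1) * τ i := by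
    have hcomp : fderiv ℝ (fun y => circlePoint (f y)) x = _ :=
      (hτ.hasFDerivAt.comp x hf.hasFDerivAt).fderiv
    rw [jacobianMatrix, Matrix.of_apply, hcomp]
    rfl
  have hτ_sq : τ 0 ^ 2 + τ 1 ^ 2 = 1 := by
    simpa [hτ_norm, Fin.sum_univ_two] using (EuclideanSpace.real_norm_sq_eq τ).symm
  rw [Matrix.det_fin_two]
  simp only [hjac, Fin.sum_univ_two]
  linear_combination (fderiv ℝ f x (EuclideanSpace.single 0 1) ^ 2 +
    fderiv ℝ f x (EuclideanSpace.single 1 1) ^ 2) * hτ_sq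

end CirclePoint

section AngularLift

/-- The isometry of `ℝ²` with `ℂ` which preserves orientation and sends `circlePoint γ` to `1`. -/
def circleFrame (γ : ℝ) : R2 ≃ₗᵢ[ℝ] ℂ :=
  ((rotation (Circle.exp γ)).trans Complex.orthonormalBasisOneI.repr).symm

lemma circlePoint_add (γ t : ℝ) : circlePoint (γ + t) = (circleFrame γ).symm (Circle.exp t) := by
  rw [circlePoint, Circle.exp_add, Circle.coe_mul]
  rfl

/-- The angle of a point relative to `γ`, cut off near the antipode `-circlePoint γ`. -/
def angularLift (γ δ : ℝ) (w : R2) : ℝ := cutoffArg δ (circleFrame γ w)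

variable {γ δ : ℝ} {w : R2}

lemma norm_circleFrame_add_one (γ : ℝ) (w : R2) :
    ‖circleFrame γ w + 1‖ = ‖w + circlePoint γ‖ := by
  have hone : circlePoint γ = (circleFrame γ).symm 1 := by
    simpa only [add_zero, Circle.exp_zero, Circle.coe_one] using circlePoint_add γ 0
  rw [hone, ← (circleFrame γ).norm_map, map_add, LinearIsometryEquiv.apply_symm_apply]

lemma circlePoint_add_arg (hw : ‖w‖ = 1) : circlePoint (γ + (circleFrame γ w).arg) = w := by
  have hpolar : (Circle.exp (circleFrame γ w).arg : ℂ) = circleFrame γ w := by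
    rw [Circle.coe_exp]
    simpa [hw] using Complex.norm_mul_exp_arg_mul_I (circleFrame γ w)
  rw [circlePoint_add, hpolar, LinearIsometryEquiv.symm_apply_apply]

lemma circlePoint_add_angularLift (hδ : 0 < δ) (hw : ‖w‖ = 1)
    (hwδ : 2 * δ ≤ ‖w + circlePoint γ‖) : circlePoint (γ + angularLift γ δ w) = w := by
  rw [angularLift, cutoffArg_eq_arg hδ (by rwa [LinearIsometryEquiv.norm_map])
    (by rwa [norm_circleFrame_add_one]), circlePoint_add_arg hw]

lemma contDiff_angularLift (γ : ℝ) (hδ : 0 < δ) : ContDiff ℝ 1 (angularLift γ δ) :=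
  (contDiff_cutoffArg hδ).comp (circleFrame γ).contDiff

lemma norm_fderiv_angularLift (γ δ : ℝ) (w : R2) :
    ‖fderiv ℝ (angularLift γ δ) w‖ = ‖fderiv ℝ (cutoffArg δ) (circleFrame γ w)‖ := by
  have hcomp : fderiv ℝ (angularLift γ δ) w = _ :=
    (circleFrame γ).toContinuousLinearEquiv.comp_right_fderiv (f := cutoffArg δ) (x := w)
  rw [hcomp]
  exact ContinuousLinearMap.opNorm_comp_linearIsometryEquiv _ _

lemma norm_fderiv_angularLift_le_one (hδ : 0 < δ) (hw : ‖w‖ = 1)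
    (hwδ : 2 * δ ≤ ‖w + circlePoint γ‖) : ‖fderiv ℝ (angularLift γ δ) w‖ ≤ 1 := by
  rw [norm_fderiv_angularLift]
  exact norm_fderiv_cutoffArg_le_one hδ (by rwa [LinearIsometryEquiv.norm_map])
    (by rwa [norm_circleFrame_add_one])

lemma exists_norm_fderiv_angularLift_le : ∃ C : ℝ, 0 ≤ C ∧ ∀ γ δ : ℝ, 0 < δ → ∀ w : R2, ‖w‖ = 1 →
    ‖fderiv ℝ (angularLift γ δ) w‖ ≤ 1 + C / δ := by
  obtain ⟨C, hC, hbound⟩ := exists_norm_fderiv_cutoffArg_le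
  refine ⟨C, hC, fun γ δ hδ w hw => ?_⟩
  rw [norm_fderiv_angularLift]
  exact hbound δ hδ _ (by rwa [LinearIsometryEquiv.norm_map])

end AngularLift

section Density

/-- The area integrand `√(1 + |M|²)` of the target functional. -/
def areaDensity (M : Matrix (Fin 2) (Fin 2) ℝ) : ℝ := √(1 + ∑ i, ∑ j, M i j ^ 2)

/-- The area integrand of a scalar function whose partial derivatives are the images under `T` of
the partial derivatives `c 0`, `c 1` of a planar map. -/
def composedDensity (T : R2 →L[ℝ] ℝ) (c : Fin 2 → R2) : ℝ := √(1 + ∑ j, T (c j) ^ 2)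

variable {T : R2 →L[ℝ] ℝ} {K : ℝ}

lemma one_le_areaDensity (M : Matrix (Fin 2) (Fin 2) ℝ) : 1 ≤ areaDensity M :=
  Real.one_le_sqrt.2 (le_add_of_nonneg_right (by positivity))

lemma composedDensity_le_one_add (hT : ‖T‖ ≤ K) (c : Fin 2 → R2) :
    composedDensity T c ≤ 1 + K * ∑ j, ‖c j‖ := by
  have hsqrt : composedDensity T c ≤ 1 + ∑ j, |T (c j)| := by
    refine Real.sqrt_le_iff.2 ⟨by positivity, ?_⟩
    simp only [Fin.sum_univ_two]
    rw [← sq_abs (T (c 0)), ← sq_abs (T (c 1))]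
    nlinarith [abs_nonneg (T (c 0)), abs_nonneg (T (c 1)),
      mul_nonneg (abs_nonneg (T (c 0))) (abs_nonneg (T (c 1)))]
  rw [Finset.mul_sum]
  exact hsqrt.trans (add_le_add_right (Finset.sum_le_sum fun j _ => T.le_of_opNorm_le hT _) 1)

lemma composedDensity_column_le (hK : 1 ≤ K) (hT : ‖T‖ ≤ K) (M : Matrix (Fin 2) (Fin 2) ℝ) :
    composedDensity T (column M) ≤ K * areaDensity M := by
  have hcolumn (j : Fin 2) : T (column M j) ^ 2 ≤ K ^ 2 * ∑ i, M i j ^ 2 := by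
    have hnorm : ‖column M j‖ ^ 2 = ∑ i, M i j ^ 2 := EuclideanSpace.real_norm_sq_eq _
    rw [← hnorm, ← mul_pow, ← sq_abs]
    exact pow_le_pow_left₀ (abs_nonneg _) (T.le_of_opNorm_le hT _) 2
  refine Real.sqrt_le_iff.2 ⟨by unfold areaDensity; positivity, ?_⟩
  rw [mul_pow, areaDensity, Real.sq_sqrt (by positivity), mul_add, Finset.sum_comm, Finset.mul_sum]
  gcongr with j
  · nlinarith
  · exact hcolumn j

lemma tendsto_composedDensity {ι : Type*} {l : Filter ι} {S : ι → R2 →L[ℝ] ℝ} {c : ι → Fin 2 → R2}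
    {d : Fin 2 → R2} (hS : Tendsto S l (𝓝 T)) (hc : ∀ j, Tendsto (fun k => c k j) l (𝓝 (d j))) :
    Tendsto (fun k => composedDensity (S k) (c k)) l (𝓝 (composedDensity T d)) :=
  (tendsto_const_nhds.add (tendsto_finsetSum _ fun j _ =>
    ((isBoundedBilinearMap_apply.continuous.tendsto (T, d j)).comp
      (hS.prodMk_nhds (hc j))).pow 2)).sqrt

lemma classicalArea_circlePoint_comp {H : R2 → ℝ} {w : R2 → R2} (hH : Differentiable ℝ H)
    (hw : Differentiable ℝ w) (γ : ℝ) (A : Set R2) :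
    classicalArea A (fun x => circlePoint (γ + H (w x))) = ∫⁻ x in A, ENNReal.ofReal
      (composedDensity (fderiv ℝ H (w x)) fun j => fderiv ℝ w x (EuclideanSpace.single j 1)) := by
  refine lintegral_congr fun x => ?_
  have hlift : HasFDerivAt (fun y => γ + H (w y)) ((fderiv ℝ H (w x)).comp (fderiv ℝ w x)) x :=
    ((hH (w x)).hasFDerivAt.comp x (hw x).hasFDerivAt).const_add γ
  rw [add_assoc, sum_sq_add_det_sq_jacobianMatrix_circlePoint hlift.differentiableAt, hlift.fderiv]
  rfl

end Density

section Approximation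

variable {Ω A : Set R2} {u : R2 → R2} {G : R2 → Matrix (Fin 2) (Fin 2) ℝ}

/-- The `k`-th standard mollification of the extension of `g` by zero outside `Ω`. -/
def mollifyOn {F : Type*} [NormedAddCommGroup F] [NormedSpace ℝ F] (Ω : Set R2) (g : R2 → F)
    (k : ℕ) : R2 → F := mollify (standardBump k) volume (Ω.indicator g)

lemma contDiff_mollifyOn (hΩ : IsOpen Ω) (hu : IntegrableOn u Ω) (k : ℕ) :
    ContDiff ℝ 1 (mollifyOn Ω u k) :=
  mollify.contDiff (n := 1) _ (hu.integrable_indicator hΩ.measurableSet).locallyIntegrable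

lemma ae_tendsto_mollifyOn (hΩ : IsOpen Ω) (hu : IntegrableOn u Ω) :
    ∀ᵐ x, x ∈ Ω → Tendsto (fun k => mollifyOn Ω u k x) atTop (𝓝 (u x)) := by
  filter_upwards [ae_tendsto_mollify_standardBump
    (hu.integrable_indicator hΩ.measurableSet).locallyIntegrable] with x hx hxΩ
  rwa [indicator_of_mem hxΩ] at hx

lemma norm_mollifyOn_le_one (hu : ∀ x, ‖u x‖ = 1) (k : ℕ) (x : R2) : ‖mollifyOn Ω u k x‖ ≤ 1 :=
  mollify.norm_le_of_forall_norm_le _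
    (fun y => (norm_indicator_le_norm_self u y).trans (hu y).le) x

lemma eventually_fderiv_mollifyOn (h : MemW11 Ω u G) (hΩ : IsOpen Ω) (hA : IsCompact (closure A))
    (hAΩ : closure A ⊆ Ω) : ∀ᶠ k in atTop, ∀ x ∈ A, ∀ j,
      fderiv ℝ (mollifyOn Ω u k) x (EuclideanSpace.single j 1) =
        mollifyOn Ω (fun y => column (G y) j) k x := by
  obtain ⟨r, hr, hrΩ⟩ := hA.exists_cthickening_subset_open hΩ hAΩ
  filter_upwards [(tendsto_standardBump_rOut (E := R2)).eventually_le_const hr] with k hk x hx j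
  exact h.fderiv_mollify_indicator hΩ _ ((closedBall_subset_closedBall hk).trans
    ((closedBall_subset_cthickening (subset_closure hx) r).trans hrΩ)) j

variable {H : R2 → ℝ}

lemma tendsto_lintegral_circlePoint_mollifyOn (hΩ : IsOpen Ω) (hu : IntegrableOn u Ω)
    (hA : MeasurableSet A) (hA_fin : volume A ≠ ⊤) (hAΩ : A ⊆ Ω) (hH : Continuous H) (γ : ℝ) :
    Tendsto (fun k => ∫⁻ x in A,
      ‖circlePoint (γ + H (mollifyOn Ω u k x)) - circlePoint (γ + H (u x))‖ₑ) atTop (𝓝 0) := by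
  have hcont : Continuous fun w => circlePoint (γ + H w) :=
    contDiff_circlePoint.continuous.comp (continuous_const.add hH)
  rw [← lintegral_zero (μ := volume.restrict A)]
  refine tendsto_lintegral_of_dominated_convergence' (fun _ => 2) (fun k => ?_)
    (fun k => Eventually.of_forall fun x => ?_) ?_ ?_
  · exact ((hcont.comp (contDiff_mollifyOn hΩ hu k).continuous).aestronglyMeasurable.sub
      (hcont.comp_aestronglyMeasurable (hu.mono_set hAΩ).aestronglyMeasurable)).enorm
  · refine enorm_sub_le.trans_eq ?_
    rw [← ofReal_norm, ← ofReal_norm, norm_circlePoint, norm_circlePoint, ENNReal.ofReal_one,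
      one_add_one_eq_two]
  · rw [setLIntegral_const]
    exact ENNReal.mul_ne_top ENNReal.ofNat_ne_top hA_fin
  · filter_upwards [ae_restrict_of_ae (ae_tendsto_mollifyOn hΩ hu), ae_restrict_mem hA]
      with x hx hxA
    simpa using (((hcont.tendsto (u x)).comp (hx (hAΩ hxA))).sub_const
      (circlePoint (γ + H (u x)))).enorm

lemma ofReal_composedDensity_mollifyOn_le {T : R2 →L[ℝ] ℝ} {L : ℝ} (hT : ‖T‖ ≤ L)
    (c : Fin 2 → R2 → R2) (k : ℕ) (x : R2) :
    ENNReal.ofReal (composedDensity T fun j => mollifyOn Ω (c j) k x) ≤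
      1 + ENNReal.ofReal L * ∑ j, ENNReal.ofReal
        (mollify (standardBump k) volume (fun y => ‖Ω.indicator (c j) y‖) x) := by
  have hL : 0 ≤ L := (norm_nonneg T).trans hT
  have hm (j : Fin 2) : ‖mollifyOn Ω (c j) k x‖ ≤
      mollify (standardBump k) volume (fun y => ‖Ω.indicator (c j) y‖) x := mollify.norm_le _ x
  have hm_nonneg (j : Fin 2) := (norm_nonneg _).trans (hm j)
  rw [← ENNReal.ofReal_sum_of_nonneg fun j _ => hm_nonneg j, ← ENNReal.ofReal_mul hL,
    ← ENNReal.ofReal_one, ← ENNReal.ofReal_add zero_le_one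
      (mul_nonneg hL (Finset.sum_nonneg fun j _ => hm_nonneg j))]
  refine ENNReal.ofReal_le_ofReal ((composedDensity_le_one_add hT _).trans ?_)
  gcongr with j
  exact hm j

lemma tendsto_lintegral_composedDensity_mollifyOn (h : MemW11 Ω u G) (hΩ : IsOpen Ω)
    (hu : ∀ x, ‖u x‖ = 1) (hA : MeasurableSet A) (hA_fin : volume A ≠ ⊤) (hAΩ : A ⊆ Ω)
    (hH : ContDiff ℝ 1 H) :
    Tendsto (fun k => ∫⁻ x in A, ENNReal.ofReal (composedDensity
      (fderiv ℝ H (mollifyOn Ω u k x)) fun j => mollifyOn Ω (fun y => column (G y) j) k x)) atTop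
      (𝓝 (∫⁻ x in A, ENNReal.ofReal (composedDensity (fderiv ℝ H (u x)) (column (G x))))) := by
  have hH' : Continuous (fderiv ℝ H) := hH.continuous_fderiv one_ne_zero
  obtain ⟨L, hL⟩ := (isCompact_closedBall (0 : R2) 1).exists_bound_of_continuousOn hH'.continuousOn
  have hL_mollify (k : ℕ) (x : R2) : ‖fderiv ℝ H (mollifyOn Ω u k x)‖ ≤ L :=
    hL _ (mem_closedBall_zero_iff.2 (norm_mollifyOn_le_one hu k x))
  have hc := h.integrableOn_column
  refine tendsto_setLIntegral_of_le_mollify_norm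
    (fun j => (hc j).integrable_indicator hΩ.measurableSet) hA hA_fin
    (ENNReal.ofReal_ne_top (r := L)) (fun k => ?_)
    (fun k x _ => ofReal_composedDensity_mollifyOn_le (hL_mollify k x) _ k x) ?_
  · have hw (j : Fin 2) := (contDiff_mollifyOn hΩ (hc j) k).continuous
    have hT : Continuous fun x => fderiv ℝ H (mollifyOn Ω u k x) :=
      hH'.comp (contDiff_mollifyOn hΩ h.1 k).continuous
    exact (ENNReal.continuous_ofReal.comp (Real.continuous_sqrt.comp (continuous_const.add
      (continuous_finsetSum _ fun j _ => (hT.clm_apply (hw j)).pow 2)))).aemeasurable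
  · filter_upwards [ae_tendsto_mollifyOn hΩ h.1,
      ae_all_iff.2 fun j => ae_tendsto_mollifyOn hΩ (hc j)] with x hu_lim hc_lim hx
    exact ENNReal.tendsto_ofReal (tendsto_composedDensity
      ((hH'.tendsto (u x)).comp (hu_lim (hAΩ hx))) fun j => hc_lim j (hAΩ hx))

lemma tendsto_classicalArea_circlePoint_mollifyOn (h : MemW11 Ω u G) (hΩ : IsOpen Ω)
    (hu : ∀ x, ‖u x‖ = 1) (hA : IsOpen A) (hA_cpt : IsCompact (closure A)) (hAΩ : closure A ⊆ Ω)
    (hH : ContDiff ℝ 1 H) (γ : ℝ) :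
    Tendsto (fun k => classicalArea A fun x => circlePoint (γ + H (mollifyOn Ω u k x))) atTop
      (𝓝 (∫⁻ x in A, ENNReal.ofReal (composedDensity (fderiv ℝ H (u x)) (column (G x))))) := by
  refine (tendsto_lintegral_composedDensity_mollifyOn h hΩ hu hA.measurableSet
    ((measure_mono subset_closure).trans_lt hA_cpt.measure_lt_top).ne
    (subset_closure.trans hAΩ) hH).congr' ?_
  filter_upwards [eventually_fderiv_mollifyOn h hΩ hA_cpt hAΩ] with k hk
  rw [classicalArea_circlePoint_comp (hH.differentiable one_ne_zero)
    ((contDiff_mollifyOn hΩ h.1 k).differentiable one_ne_zero)]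
  exact setLIntegral_congr_fun hA.measurableSet fun x hx => by simp only [hk x hx]

end Approximation

section AreaMeasure

variable {Ω A : Set R2} {u : R2 → R2} {G : R2 → Matrix (Fin 2) (Fin 2) ℝ}

/-- The vector `(1, M)`, whose length is the area factor of the linear map `M` without its minor. -/
def graphVec (M : Matrix (Fin 2) (Fin 2) ℝ) : EuclideanSpace ℝ (Option (Fin 2 × Fin 2)) :=
  WithLp.toLp 2 fun o => o.elim 1 fun p => M p.1 p.2

lemma norm_graphVec (M : Matrix (Fin 2) (Fin 2) ℝ) : ‖graphVec M‖ = areaDensity M := by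
  simp [EuclideanSpace.norm_eq, graphVec, areaDensity, Fintype.sum_option, Fintype.sum_prod_type]

lemma MemW11.integrableOn_graphVec (h : MemW11 Ω u G) (hΩ : volume Ω ≠ ⊤) :
    IntegrableOn (fun x => graphVec (G x)) Ω := by
  refine Integrable.of_eval_piLp fun o => ?_
  cases o with
  | none => exact integrableOn_const hΩ
  | some p => exact h.2.1 p.1 p.2

lemma MemW11.integrableOn_areaDensity (h : MemW11 Ω u G) (hΩ : volume Ω ≠ ⊤) :
    IntegrableOn (fun x => areaDensity (G x)) Ω := by
  simp only [← norm_graphVec]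
  exact (h.integrableOn_graphVec hΩ).norm

/-- The measure `E ↦ ∫_{E ∩ Ω} √(1 + |G|²) dx`. -/
def areaMeasure (Ω : Set R2) (G : R2 → Matrix (Fin 2) (Fin 2) ℝ) : Measure R2 :=
  (volume.restrict Ω).withDensity fun x => ENNReal.ofReal (areaDensity (G x))

lemma areaMeasure_apply (hA : MeasurableSet A) (hAΩ : A ⊆ Ω) :
    areaMeasure Ω G A = ∫⁻ x in A, ENNReal.ofReal (areaDensity (G x)) := by
  rw [areaMeasure, withDensity_apply _ hA, Measure.restrict_restrict hA, inter_eq_left.2 hAΩ]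

lemma isFiniteMeasure_areaMeasure (h : MemW11 Ω u G) (hΩ : volume Ω ≠ ⊤) :
    IsFiniteMeasure (areaMeasure Ω G) :=
  isFiniteMeasure_withDensity_ofReal (h.integrableOn_areaDensity hΩ).2

lemma setLIntegral_le_mul_areaMeasure {f : R2 → ℝ≥0∞} {K : ℝ≥0∞} (hK : K ≠ ⊤)
    (hA : MeasurableSet A) (hAΩ : A ⊆ Ω)
    (hf : ∀ x ∈ A, f x ≤ K * ENNReal.ofReal (areaDensity (G x))) :
    ∫⁻ x in A, f x ≤ K * areaMeasure Ω G A := by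
  rw [areaMeasure_apply hA hAΩ, ← lintegral_const_mul' _ _ hK]
  exact setLIntegral_mono' hA hf

variable {γ δ : ℝ}

lemma lintegral_circlePoint_angularLift_sub_le (hu : Measurable u) (hu_norm : ∀ x, ‖u x‖ = 1)
    (hA : MeasurableSet A) (hAΩ : A ⊆ Ω) (hδ : 0 < δ) :
    ∫⁻ x in A, ‖circlePoint (γ + angularLift γ δ (u x)) - u x‖ₑ ≤
      2 * areaMeasure Ω G (A ∩ {x | ‖u x + circlePoint γ‖ < 2 * δ}) := by
  have harc : MeasurableSet {x | ‖u x + circlePoint γ‖ < 2 * δ} :=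
    measurableSet_lt (hu.add_const _).norm measurable_const
  rw [← lintegral_inter_add_sdiff _ A harc, setLIntegral_eq_zero (hA.diff harc), add_zero]
  · refine setLIntegral_le_mul_areaMeasure ENNReal.ofNat_ne_top (hA.inter harc)
      (inter_subset_left.trans hAΩ) fun x _ => ?_
    calc ‖circlePoint (γ + angularLift γ δ (u x)) - u x‖ₑ
        ≤ ‖circlePoint (γ + angularLift γ δ (u x))‖ₑ + ‖u x‖ₑ := enorm_sub_le
      _ = 2 * 1 := by
          rw [← ofReal_norm, ← ofReal_norm, norm_circlePoint, hu_norm, ENNReal.ofReal_one,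
            one_add_one_eq_two, mul_one]
      _ ≤ 2 * ENNReal.ofReal (areaDensity (G x)) := by
          gcongr
          exact ENNReal.one_le_ofReal.2 (one_le_areaDensity _)
  · intro x hx
    simp only [circlePoint_add_angularLift hδ (hu_norm x) (not_lt.1 hx.2), sub_self, enorm_zero,
      Pi.zero_apply]

lemma lintegral_composedDensity_angularLift_le (hu : Measurable u) (hu_norm : ∀ x, ‖u x‖ = 1)
    (hA : MeasurableSet A) (hAΩ : A ⊆ Ω) (hδ : 0 < δ) {K : ℝ} (hK : 1 ≤ K)
    (hlift : ∀ w : R2, ‖w‖ = 1 → ‖fderiv ℝ (angularLift γ δ) w‖ ≤ K) :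
    ∫⁻ x in A, ENNReal.ofReal (composedDensity (fderiv ℝ (angularLift γ δ) (u x)) (column (G x))) ≤
      areaMeasure Ω G A + ENNReal.ofReal K *
        areaMeasure Ω G (A ∩ {x | ‖u x + circlePoint γ‖ < 2 * δ}) := by
  have harc : MeasurableSet {x | ‖u x + circlePoint γ‖ < 2 * δ} :=
    measurableSet_lt (hu.add_const _).norm measurable_const
  rw [← lintegral_inter_add_sdiff _ A harc, add_comm]
  gcongr
  · rw [areaMeasure_apply hA hAΩ]
    refine (setLIntegral_mono' (hA.diff harc) fun x hx => ENNReal.ofReal_le_ofReal ?_).trans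
      (lintegral_mono_set sdiff_subset)
    simpa only [one_mul] using composedDensity_column_le le_rfl
      (norm_fderiv_angularLift_le_one hδ (hu_norm x) (not_lt.1 hx.2)) (G x)
  · refine setLIntegral_le_mul_areaMeasure ENNReal.ofReal_ne_top (hA.inter harc)
      (inter_subset_left.trans hAΩ) fun x _ => ?_
    rw [← ENNReal.ofReal_mul (zero_le_one.trans hK)]
    exact ENNReal.ofReal_le_ofReal (composedDensity_column_le hK (hlift _ (hu_norm x)) _)

end AreaMeasure

section Pigeonhole

lemma exists_card_mul_measure_le {α ι : Type*} [MeasurableSpace α] {μ : Measure α} [Fintype ι]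
    [Nonempty ι] {s : ι → Set α} {t : Set α} (hs : ∀ i, MeasurableSet (s i))
    (hdisj : Pairwise (Function.onFun Disjoint s)) (hst : ∀ i, s i ⊆ t) :
    ∃ i, Fintype.card ι * μ (s i) ≤ μ t := by
  obtain ⟨i, -, hi⟩ := Finset.exists_min_image Finset.univ (fun i => μ (s i))
    Finset.univ_nonempty
  refine ⟨i, ?_⟩
  calc Fintype.card ι * μ (s i) = Finset.univ.card • μ (s i) := by
        rw [nsmul_eq_mul, Finset.card_univ]
    _ ≤ ∑ j, μ (s j) := Finset.card_nsmul_le_sum _ _ _ hi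
    _ = μ (⋃ j, s j) := by rw [measure_iUnion hdisj hs, tsum_fintype]
    _ ≤ μ t := measure_mono (iUnion_subset hst)

lemma ball_neg_circlePoint (γ r : ℝ) :
    ball (-circlePoint γ) r = {w | ‖w + circlePoint γ‖ < r} := by
  ext w
  rw [mem_ball, dist_eq_norm, sub_neg_eq_add, mem_ofPred_eq]

lemma one_div_le_norm_circlePoint_sub (γ : ℝ) {n : ℕ} {i j : Fin (n + 1)} (hij : i ≠ j) :
    1 / (4 * ((n : ℝ) + 1)) ≤ ‖circlePoint (γ + i / (2 * (n + 1))) -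
      circlePoint (γ + j / (2 * (n + 1)))‖ := by
  have hsub : |γ + (i : ℝ) / (2 * (n + 1)) - (γ + j / (2 * (n + 1)))| =
      |(i : ℝ) - j| / (2 * (n + 1)) := by
    rw [add_sub_add_left_eq_sub, ← sub_div, abs_div, abs_of_pos (a := 2 * ((n : ℝ) + 1))
      (by positivity)]
  have hlower : 1 ≤ |(i : ℝ) - j| := by
    have hne : ((i : ℕ) : ℤ) - ((j : ℕ) : ℤ) ≠ 0 := by
      rwa [sub_ne_zero, Ne, Nat.cast_inj, ← Fin.ext_iff]
    exact_mod_cast Int.one_le_abs hne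
  have hupper : |(i : ℝ) - j| ≤ n + 1 := by
    have hi : (i : ℝ) < n + 1 := by exact_mod_cast i.2
    have hj : (j : ℝ) < n + 1 := by exact_mod_cast j.2
    exact (abs_sub_lt_of_nonneg_of_lt (Nat.cast_nonneg _) hi (Nat.cast_nonneg _) hj).le
  calc 1 / (4 * ((n : ℝ) + 1)) = 1 / (2 * (n + 1)) / 2 := by
        field_simp
        norm_num
    _ ≤ |(i : ℝ) - j| / (2 * (n + 1)) / 2 := by gcongr
    _ ≤ _ := by
        rw [← hsub]
        refine half_abs_sub_le_norm_circlePoint_sub ?_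
        rw [hsub, div_le_iff₀ (by positivity)]
        nlinarith [Real.pi_gt_three]

lemma norm_add_circlePoint_le_one {w : R2} (γ : ℝ) {n : ℕ} (j : Fin (n + 1))
    (hw : ‖w + circlePoint (γ + j / (2 * (n + 1)))‖ < 1 / (8 * (n + 1))) :
    ‖w + circlePoint γ‖ ≤ 1 := by
  set γ' : ℝ := γ + j / (2 * (n + 1)) with hγ'
  have hangle_sub : |γ' - γ| ≤ 1 / 2 := by
    have hj : (j : ℝ) < n + 1 := by exact_mod_cast j.2
    rw [hγ', add_sub_cancel_left, abs_of_nonneg (by positivity),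
      div_le_div_iff₀ (by positivity) two_pos]
    linarith
  have hradius : 1 / (8 * ((n : ℝ) + 1)) ≤ 1 / 8 :=
    one_div_le_one_div_of_le (by norm_num) (by linarith [n.cast_nonneg (α := ℝ)])
  calc ‖w + circlePoint γ‖ = ‖w + circlePoint γ' - (circlePoint γ' - circlePoint γ)‖ := by
        congr 1
        abel
    _ ≤ ‖w + circlePoint γ'‖ + ‖circlePoint γ' - circlePoint γ‖ := norm_sub_le _ _
    _ ≤ 1 := by linarith [norm_circlePoint_sub_le γ' γ]

lemma exists_mul_measure_norm_add_circlePoint_lt_le (μ : Measure R2) (γ : ℝ) (n : ℕ) :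
    ∃ γ' : ℝ, (n + 1) * μ {w | ‖w + circlePoint γ'‖ < 1 / (8 * (n + 1))} ≤
      μ {w | ‖w + circlePoint γ‖ ≤ 1} := by
  have hdisj : Pairwise (Function.onFun Disjoint fun j : Fin (n + 1) =>
      ball (-circlePoint (γ + j / (2 * (n + 1)))) (1 / (8 * (n + 1)))) := by
    intro i j hij
    refine ball_disjoint_ball ?_
    rw [dist_neg_neg, dist_eq_norm]
    refine le_of_eq_of_le ?_ (one_div_le_norm_circlePoint_sub γ hij)
    field_simp
    norm_num
  obtain ⟨j, hj⟩ := exists_card_mul_measure_le (μ := μ) (t := {w | ‖w + circlePoint γ‖ ≤ 1})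
    (fun _ => measurableSet_ball) hdisj fun j w hw => by
      rw [ball_neg_circlePoint] at hw
      exact norm_add_circlePoint_le_one γ j hw
  refine ⟨γ + j / (2 * (n + 1)), ?_⟩
  simpa only [Fintype.card_fin, Nat.cast_add, Nat.cast_one, ball_neg_circlePoint] using hj

end Pigeonhole

section RelaxedArea

variable {Ω A : Set R2} {u : R2 → R2} {G : R2 → Matrix (Fin 2) (Fin 2) ℝ}

lemma tendsto_natCast_add_one_inv_nhds_zero :
    Tendsto (fun k : ℕ => ((k : ℝ≥0∞) + 1)⁻¹) atTop (𝓝 0) := by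
  simpa using (tendsto_add_atTop_iff_nat 1).2 ENNReal.tendsto_inv_nat_nhds_zero

lemma relaxedArea_le_of_forall_exists {a : ℝ≥0∞} (hA : MeasurableSet A)
    (hu : AEStronglyMeasurable u (volume.restrict A))
    (h : ∀ ε : ℝ≥0∞, ε ≠ 0 → ∃ v : R2 → R2, ContDiffOn ℝ 1 v A ∧
      ∫⁻ x in A, ‖v x - u x‖ₑ ≤ ε ∧ classicalArea A v ≤ a + ε) :
    relaxedArea u A ≤ a := by
  choose v hv hv_sub hv_area using fun k : ℕ =>
    h ((k : ℝ≥0∞) + 1)⁻¹ (ENNReal.inv_ne_zero.2 (by finiteness))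
  have hmeas (k : ℕ) : AEStronglyMeasurable (fun x => v k x - u x) (volume.restrict A) :=
    ((hv k).continuousOn.aestronglyMeasurable hA).sub hu
  have hlim : Tendsto (fun k => ∫ x in A, ‖v k x - u x‖) atTop (𝓝 0) := by
    simp only [fun k => integral_norm_eq_lintegral_enorm (hmeas k)]
    exact (ENNReal.tendsto_toReal ENNReal.zero_ne_top).comp
      (tendsto_of_tendsto_of_tendsto_of_le_of_le tendsto_const_nhds
        tendsto_natCast_add_one_inv_nhds_zero (fun _ => zero_le) hv_sub)
  have hint (k : ℕ) : IntegrableOn (fun x => v k x - u x) A :=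
    ⟨hmeas k, (hv_sub k).trans_lt (ENNReal.inv_lt_top.2 (by positivity))⟩
  calc relaxedArea u A ≤ liminf (fun k => classicalArea A (v k)) atTop :=
        sInf_le ⟨v, hv, hint, hlim, rfl⟩
    _ ≤ liminf (fun k : ℕ => a + ((k : ℝ≥0∞) + 1)⁻¹) atTop :=
        liminf_le_liminf (Eventually.of_forall hv_area)
    _ = a := by
        rw [(tendsto_const_nhds.add tendsto_natCast_add_one_inv_nhds_zero).liminf_eq, add_zero]

lemma SphereValued.volume_ne_top (hS : SphereValued Ω u) (hu : IntegrableOn u Ω) :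
    volume Ω ≠ ⊤ := by
  have henorm : ∫⁻ x in Ω, ‖u x‖ₑ = volume Ω := by
    rw [← setLIntegral_one]
    refine lintegral_congr_ae ?_
    filter_upwards [hS] with x hx using by rw [← ofReal_norm, hx, ENNReal.ofReal_one]
  exact henorm ▸ hu.2.ne

lemma exists_contDiff_classicalArea_le (h : MemW11 Ω u G) (hΩ : IsOpen Ω) (hu : Measurable u)
    (hu_norm : ∀ x, ‖u x‖ = 1) (hA : IsOpen A) (hA_cpt : IsCompact (closure A))
    (hAΩ : closure A ⊆ Ω) {γ δ K : ℝ} (hδ : 0 < δ) (hK : 1 ≤ K)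
    (hlift : ∀ w : R2, ‖w‖ = 1 → ‖fderiv ℝ (angularLift γ δ) w‖ ≤ K) {ε : ℝ≥0∞} (hε : ε ≠ 0) :
    ∃ v : R2 → R2, ContDiff ℝ 1 v ∧
      ∫⁻ x in A, ‖v x - u x‖ₑ ≤
        ε + 2 * areaMeasure Ω G (A ∩ {x | ‖u x + circlePoint γ‖ < 2 * δ}) ∧
      classicalArea A v ≤ areaMeasure Ω G A + ENNReal.ofReal K *
        areaMeasure Ω G (A ∩ {x | ‖u x + circlePoint γ‖ < 2 * δ}) + ε := by
  have hA_sub : A ⊆ Ω := subset_closure.trans hAΩ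
  have hΩ_fin := SphereValued.volume_ne_top (ae_of_all _ hu_norm) h.1
  have hfinite := isFiniteMeasure_areaMeasure h hΩ_fin
  have hH := contDiff_angularLift γ hδ
  have hdens := lintegral_composedDensity_angularLift_le (G := G) hu hu_norm hA.measurableSet
    hA_sub hδ hK hlift
  have hclose := (tendsto_lintegral_circlePoint_mollifyOn hΩ h.1 hA.measurableSet
    (measure_ne_top_of_subset hA_sub hΩ_fin) hA_sub hH.continuous γ).eventually_le_const
      (pos_iff_ne_zero.2 hε)
  have harea := (tendsto_classicalArea_circlePoint_mollifyOn h hΩ hu_norm hA hA_cpt hAΩ hH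
    γ).eventually_le_const (ENNReal.lt_add_right (ne_top_of_le_ne_top (by finiteness) hdens) hε)
  obtain ⟨k, hk_close, hk_area⟩ := (hclose.and harea).exists
  have hv : ContDiff ℝ 1 fun x => circlePoint (γ + angularLift γ δ (mollifyOn Ω u k x)) :=
    contDiff_circlePoint.comp (contDiff_const.add (hH.comp (contDiff_mollifyOn hΩ h.1 k)))
  refine ⟨_, hv, ?_, hk_area.trans (add_le_add_left hdens ε)⟩
  have hlift_meas : Measurable fun x => circlePoint (γ + angularLift γ δ (u x)) :=
    (contDiff_circlePoint.continuous.comp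
      (continuous_const.add hH.continuous)).measurable.comp hu
  calc ∫⁻ x in A, ‖circlePoint (γ + angularLift γ δ (mollifyOn Ω u k x)) - u x‖ₑ
      ≤ ∫⁻ x in A, (‖circlePoint (γ + angularLift γ δ (mollifyOn Ω u k x)) -
          circlePoint (γ + angularLift γ δ (u x))‖ₑ +
          ‖circlePoint (γ + angularLift γ δ (u x)) - u x‖ₑ) :=
        lintegral_mono fun x => by
          rw [← sub_add_sub_cancel _ (circlePoint (γ + angularLift γ δ (u x))) (u x)]
          exact enorm_add_le _ _
    _ = _ := lintegral_add_left (hv.continuous.measurable.sub hlift_meas).enorm _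
    _ ≤ _ := add_le_add hk_close
        (lintegral_circlePoint_angularLift_sub_le hu hu_norm hA.measurableSet hA_sub hδ)

lemma exists_angle_mul_areaMeasure_le (hu : Measurable u) (hA : MeasurableSet A) (γ : ℝ) (n : ℕ) :
    ∃ γ' : ℝ,
      (n + 1) * areaMeasure Ω G (A ∩ {x | ‖u x + circlePoint γ'‖ < 2 * (1 / (16 * (n + 1)))}) ≤
        areaMeasure Ω G (A ∩ {x | ‖u x + circlePoint γ‖ ≤ 1}) := by
  obtain ⟨γ', hγ'⟩ := exists_mul_measure_norm_add_circlePoint_lt_le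
    (((areaMeasure Ω G).restrict A).map u) γ n
  have hlt : MeasurableSet {w : R2 | ‖w + circlePoint γ'‖ < 1 / (8 * (n + 1))} :=
    measurableSet_lt (measurable_id.add_const _).norm measurable_const
  have hle : MeasurableSet {w : R2 | ‖w + circlePoint γ‖ ≤ 1} :=
    measurableSet_le (measurable_id.add_const _).norm measurable_const
  rw [Measure.map_apply hu hlt, Measure.map_apply hu hle, Measure.restrict_apply' hA,
    Measure.restrict_apply' hA, inter_comm, inter_comm _ A] at hγ'
  have hradius : 2 * (1 / (16 * ((n : ℝ) + 1))) = 1 / (8 * (n + 1)) := by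
    field_simp
    norm_num
  exact ⟨γ', hradius ▸ hγ'⟩

/- Removing an arc of length `δ` costs `C / δ` times its measure, and one of `1 / δ` disjoint arcs
has measure at most `δ` times that of their union: the cost stays bounded as `δ → 0`. -/
lemma exists_relaxedArea_le : ∃ C : ℝ≥0∞, C ≠ ⊤ ∧ ∀ {Ω A : Set R2} {u : R2 → R2}
    {G : R2 → Matrix (Fin 2) (Fin 2) ℝ}, MemW11 Ω u G → IsOpen Ω → Measurable u →
    (∀ x, ‖u x‖ = 1) → IsOpen A → IsCompact (closure A) → closure A ⊆ Ω → ∀ γ : ℝ,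
    relaxedArea u A ≤
      areaMeasure Ω G A + C * areaMeasure Ω G (A ∩ {x | ‖u x + circlePoint γ‖ ≤ 1}) := by
  obtain ⟨C, hC, hlift⟩ := exists_norm_fderiv_angularLift_le
  refine ⟨ENNReal.ofReal (1 + 16 * C), ENNReal.ofReal_ne_top, ?_⟩
  intro Ω A u G h hΩ hu hu_norm hA hA_cpt hAΩ γ
  have hfinite := isFiniteMeasure_areaMeasure h
    (SphereValued.volume_ne_top (ae_of_all _ hu_norm) h.1)
  set b := areaMeasure Ω G (A ∩ {x | ‖u x + circlePoint γ‖ ≤ 1})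
  have hb_fin : b ≠ ⊤ := measure_ne_top _ _
  refine relaxedArea_le_of_forall_exists hA.measurableSet hu.aestronglyMeasurable fun ε hε => ?_
  obtain ⟨n, hn⟩ : ∃ n : ℕ, 2 * b * ((n : ℝ≥0∞) + 1)⁻¹ ≤ ε / 2 := by
    have hlim := ENNReal.Tendsto.const_mul tendsto_natCast_add_one_inv_nhds_zero (a := 2 * b)
      (Or.inr (by finiteness))
    rw [mul_zero] at hlim
    exact (hlim.eventually_le_const (ENNReal.half_pos hε)).exists
  obtain ⟨γ', hγ'⟩ := exists_angle_mul_areaMeasure_le (Ω := Ω) (G := G) hu hA.measurableSet γ n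
  have hδ : 0 < 1 / (16 * ((n : ℝ) + 1)) := by positivity
  obtain ⟨v, hv, hv_sub, hv_area⟩ := exists_contDiff_classicalArea_le h hΩ hu hu_norm hA hA_cpt hAΩ
    hδ (le_add_of_nonneg_right (by positivity)) (hlift γ' _ hδ) (ENNReal.half_pos hε).ne'
  set s := areaMeasure Ω G (A ∩ {x | ‖u x + circlePoint γ'‖ < 2 * (1 / (16 * (n + 1)))})
  have hs : s ≤ b * ((n : ℝ≥0∞) + 1)⁻¹ := by
    rwa [← div_eq_mul_inv, ENNReal.le_div_iff_mul_le (by simp) (by simp), mul_comm]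
  refine ⟨v, hv.contDiffOn, ?_, ?_⟩
  · calc ∫⁻ x in A, ‖v x - u x‖ₑ ≤ ε / 2 + 2 * s := hv_sub
      _ ≤ ε / 2 + ε / 2 := by
          gcongr
          exact (mul_le_mul_right hs 2).trans (by rwa [← mul_assoc])
      _ = ε := ENNReal.add_halves ε
  · have hcost : 1 + C / (1 / (16 * ((n : ℝ) + 1))) ≤ (1 + 16 * C) * (n + 1) := by
      rw [div_div_eq_mul_div, div_one]
      nlinarith [n.cast_nonneg (α := ℝ)]
    have hcost_mul : ENNReal.ofReal (1 + C / (1 / (16 * ((n : ℝ) + 1)))) * s ≤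
        ENNReal.ofReal (1 + 16 * C) * b :=
      calc _ ≤ ENNReal.ofReal ((1 + 16 * C) * (n + 1)) * s := by gcongr
        _ = ENNReal.ofReal (1 + 16 * C) * ((n + 1) * s) := by
            rw [ENNReal.ofReal_mul (by positivity), mul_assoc, ENNReal.ofReal_add n.cast_nonneg
              zero_le_one, ENNReal.ofReal_natCast, ENNReal.ofReal_one]
        _ ≤ ENNReal.ofReal (1 + 16 * C) * b := by gcongr
    exact hv_area.trans (add_le_add (add_le_add_right hcost_mul _) ENNReal.half_le_self)

end RelaxedArea

section Envelope

variable {Ω E K : Set R2} {u : R2 → R2} {G : R2 → Matrix (Fin 2) (Fin 2) ℝ} {γ : ℝ}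

lemma relaxedArea_empty (u : R2 → R2) : relaxedArea u ∅ = 0 :=
  le_antisymm (sInf_le ⟨fun _ => 0, fun _ => contDiffOn_const, fun _ => integrableOn_empty,
    by simp, by simp [classicalArea]⟩) zero_le

/-- The envelope `𝒜**(u, ·)` as an outer measure, generated by the open subsets of `Ω`. -/
def envOuterMeasure (u : R2 → R2) (Ω : Set R2) : OuterMeasure R2 :=
  inducedOuterMeasure (P := fun A => IsOpen A ∧ A ⊆ Ω) (fun A _ => relaxedArea u A)
    ⟨isOpen_empty, empty_subset Ω⟩ (relaxedArea_empty u)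

lemma envA_eq_envOuterMeasure (u : R2 → R2) (Ω E : Set R2) :
    envA u Ω E = envOuterMeasure u Ω E := by
  refine le_antisymm (le_iInf₂ fun A hEA => ?_) (le_sInf ?_)
  · by_cases hA : ∀ k, IsOpen (A k) ∧ A k ⊆ Ω
    · exact sInf_le ⟨A, hA, hEA, tsum_congr fun k => extend_eq (fun A _ => relaxedArea u A) (hA k)⟩
    · obtain ⟨k, hk⟩ := not_forall.1 hA
      exact le_top.trans_eq (ENNReal.tsum_eq_top_of_eq_top ⟨k, iInf_neg hk⟩).symm
  · rintro a ⟨A, hA, hEA, rfl⟩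
    exact iInf₂_le_of_le A hEA
      (tsum_congr fun k => extend_eq (fun A _ => relaxedArea u A) (hA k)).le

lemma envOuterMeasure_le_relaxedArea (hE : IsOpen E) (hEΩ : E ⊆ Ω) :
    envOuterMeasure u Ω E ≤ relaxedArea u E :=
  (OuterMeasure.ofFunction_le (m_empty := extend_empty ⟨isOpen_empty, empty_subset Ω⟩
    (relaxedArea_empty u)) E).trans_eq (extend_eq _ ⟨hE, hEΩ⟩)

lemma envOuterMeasure_le_areaMeasure_of_one_lt_norm (h : MemW11 Ω u G) (hΩ : IsOpen Ω)
    (hu : Measurable u) (hu_norm : ∀ x, ‖u x‖ = 1) (hE : MeasurableSet E) (hK : IsCompact K)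
    (hEK : E ⊆ K) (hKΩ : K ⊆ Ω) (hEγ : ∀ x ∈ E, 1 < ‖u x + circlePoint γ‖) :
    envOuterMeasure u Ω E ≤ areaMeasure Ω G E := by
  obtain ⟨C, hC, hrelaxed⟩ := exists_relaxedArea_le
  obtain ⟨W, hW, hKW, hWΩ, hW_cpt⟩ := exists_open_between_and_isCompact_closure hK hΩ hKΩ
  have hfinite := isFiniteMeasure_areaMeasure h
    (SphereValued.volume_ne_top (ae_of_all _ hu_norm) h.1)
  have hbound (ε : ℝ≥0∞) (hε : ε ≠ 0) :
      envOuterMeasure u Ω E ≤ areaMeasure Ω G E + (1 + C) * ε := by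
    obtain ⟨V, hEV, hV, -, hVE⟩ := hE.exists_isOpen_sdiff_lt (measure_ne_top (areaMeasure Ω G) E) hε
    have hA : IsOpen (V ∩ W) := hV.inter hW
    have hA_closure : closure (V ∩ W) ⊆ closure W := closure_mono inter_subset_right
    have hAΩ : closure (V ∩ W) ⊆ Ω := hA_closure.trans hWΩ
    have hbad : (V ∩ W) ∩ {x | ‖u x + circlePoint γ‖ ≤ 1} ⊆ V \ E :=
      fun x hx => ⟨hx.1.1, fun hxE => (hEγ x hxE).not_ge hx.2⟩
    calc envOuterMeasure u Ω E ≤ envOuterMeasure u Ω (V ∩ W) :=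
          measure_mono (subset_inter hEV (hEK.trans hKW))
      _ ≤ relaxedArea u (V ∩ W) :=
          envOuterMeasure_le_relaxedArea hA (subset_closure.trans hAΩ)
      _ ≤ areaMeasure Ω G (V ∩ W) +
            C * areaMeasure Ω G ((V ∩ W) ∩ {x | ‖u x + circlePoint γ‖ ≤ 1}) :=
          hrelaxed h hΩ hu hu_norm hA (hW_cpt.of_isClosed_subset isClosed_closure hA_closure) hAΩ γ
      _ ≤ areaMeasure Ω G E + areaMeasure Ω G (V \ E) + C * areaMeasure Ω G (V \ E) := by
          gcongr
          refine (measure_mono ?_).trans (measure_union_le E (V \ E))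
          rw [union_sdiff_self]
          exact inter_subset_left.trans subset_union_right
      _ ≤ areaMeasure Ω G E + ε + C * ε := by gcongr
      _ = areaMeasure Ω G E + (1 + C) * ε := by ring
  have hlim := (ENNReal.Tendsto.const_mul tendsto_natCast_add_one_inv_nhds_zero (a := 1 + C)
    (Or.inr (by finiteness))).const_add (areaMeasure Ω G E)
  rw [mul_zero, add_zero] at hlim
  exact ge_of_tendsto' hlim fun k => hbound _ (ENNReal.inv_ne_zero.2 (by finiteness))

lemma one_lt_norm_add_circlePoint_pi {w : R2} (hw : ‖w‖ = 1) (h : ‖w + circlePoint 0‖ ≤ 1) :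
    1 < ‖w + circlePoint Real.pi‖ := by
  have hpi : circlePoint Real.pi = -circlePoint 0 := by
    simp [circlePoint]
  have hparallelogram := parallelogram_law_with_norm ℝ w (circlePoint 0)
  rw [hw, norm_circlePoint, sub_eq_add_neg, ← hpi] at hparallelogram
  nlinarith [norm_nonneg (w + circlePoint 0), norm_nonneg (w + circlePoint Real.pi)]

lemma envOuterMeasure_le_areaMeasure_of_subset_isCompact (h : MemW11 Ω u G) (hΩ : IsOpen Ω)
    (hu : Measurable u) (hu_norm : ∀ x, ‖u x‖ = 1) (hE : MeasurableSet E) (hK : IsCompact K)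
    (hEK : E ⊆ K) (hKΩ : K ⊆ Ω) :
    envOuterMeasure u Ω E ≤ areaMeasure Ω G E := by
  set S := {x | 1 < ‖u x + circlePoint 0‖}
  have hS : MeasurableSet S := measurableSet_lt measurable_const (hu.add_const _).norm
  calc envOuterMeasure u Ω E ≤ envOuterMeasure u Ω (E ∩ S) + envOuterMeasure u Ω (E \ S) := by
        conv_lhs => rw [← inter_union_sdiff E S]
        exact measure_union_le _ _
    _ ≤ areaMeasure Ω G (E ∩ S) + areaMeasure Ω G (E \ S) :=
        add_le_add
          (envOuterMeasure_le_areaMeasure_of_one_lt_norm h hΩ hu hu_norm (hE.inter hS) hK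
            (inter_subset_left.trans hEK) hKΩ fun _ hx => hx.2)
          (envOuterMeasure_le_areaMeasure_of_one_lt_norm h hΩ hu hu_norm (hE.diff hS) hK
            (sdiff_subset.trans hEK) hKΩ fun x hx =>
              one_lt_norm_add_circlePoint_pi (hu_norm x) (not_lt.1 hx.2))
    _ = areaMeasure Ω G E := measure_inter_add_sdiff E hS

lemma outerMeasure_le_measure_of_iUnion {α : Type*} [MeasurableSpace α] {m : OuterMeasure α}
    {μ : Measure α} {s : ℕ → Set α} {t : Set α} (hs : ∀ n, MeasurableSet (s n))
    (ht : MeasurableSet t) (hts : t ⊆ ⋃ n, s n)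
    (h : ∀ n t', MeasurableSet t' → t' ⊆ s n → m t' ≤ μ t') : m t ≤ μ t := by
  have hpiece (n : ℕ) : MeasurableSet (t ∩ disjointed s n) := ht.inter (.disjointed hs n)
  have hunion : ⋃ n, t ∩ disjointed s n = t := by
    rw [← inter_iUnion, iUnion_disjointed, inter_eq_left.2 hts]
  calc m t ≤ ∑' n, m (t ∩ disjointed s n) := by
        conv_lhs => rw [← hunion]
        exact measure_iUnion_le _
    _ ≤ ∑' n, μ (t ∩ disjointed s n) := ENNReal.tsum_le_tsum fun n =>
        h n _ (hpiece n) (inter_subset_right.trans (disjointed_subset s n))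
    _ = μ t := by
        rw [← measure_iUnion _ hpiece, hunion]
        exact fun i j hij => (disjoint_disjointed s hij).mono inter_subset_right inter_subset_right

lemma envOuterMeasure_le_areaMeasure (h : MemW11 Ω u G) (hΩ : IsOpen Ω) (hu : Measurable u)
    (hu_norm : ∀ x, ‖u x‖ = 1) (hE : MeasurableSet E) (hEΩ : E ⊆ Ω) :
    envOuterMeasure u Ω E ≤ areaMeasure Ω G E := by
  have := hΩ.locallyCompactSpace
  obtain ⟨K, hK, hKΩ⟩ : IsSigmaCompact Ω := isSigmaCompact_iff_sigmaCompactSpace.2 inferInstance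
  exact outerMeasure_le_measure_of_iUnion (fun n => (hK n).measurableSet) hE (hEΩ.trans hKΩ.ge)
    fun n E' hE' hE'K => envOuterMeasure_le_areaMeasure_of_subset_isCompact h hΩ hu hu_norm hE'
      (hK n) hE'K ((subset_iUnion K n).trans hKΩ.le)

end Envelope

section Duality

variable {E H : Type*} [NormedAddCommGroup E] [NormedSpace ℝ E] [FiniteDimensional ℝ E]
  [MeasurableSpace E] [BorelSpace E] [NormedAddCommGroup H] [InnerProductSpace ℝ H]
  {μ : Measure E} [μ.IsAddHaarMeasure] {A K : Set E} {F ψ : E → H} {a : ℝ≥0∞}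

lemma inner_normalize_self (y : H) : inner ℝ (NormedSpace.normalize y) y = ‖y‖ := by
  rcases eq_or_ne y 0 with rfl | hy
  · simp
  · rw [NormedSpace.normalize, real_inner_smul_left, real_inner_self_eq_norm_sq, sq,
      inv_mul_cancel_left₀ (norm_ne_zero_iff.2 hy)]

lemma norm_normalize_le_one (y : H) : ‖NormedSpace.normalize y‖ ≤ 1 := by
  rcases eq_or_ne y 0 with rfl | hy
  · simp
  · exact (NormedSpace.norm_normalize_eq_one_iff.2 hy).le

variable [CompleteSpace H]

lemma tendsto_setIntegral_inner_mollify (hψ : Integrable ψ μ) {C : ℝ}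
    (hψC : ∀ x, ‖ψ x‖ ≤ C) (hF : IntegrableOn F A μ) :
    Tendsto (fun k => ∫ x in A, inner ℝ (mollify (standardBump k) μ ψ x) (F x) ∂μ) atTop
      (𝓝 (∫ x in A, inner ℝ (ψ x) (F x) ∂μ)) := by
  refine tendsto_integral_of_dominated_convergence (fun x => C * ‖F x‖) (fun k => ?_)
    (hF.norm.const_mul C) (fun k => Eventually.of_forall fun x => ?_) ?_
  · exact (mollify.integrable _ hψ).1.restrict.inner hF.1
  · exact (norm_inner_le_norm _ _).trans (mul_le_mul_of_nonneg_right
      (mollify.norm_le_of_forall_norm_le _ hψC x) (norm_nonneg _))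
  · filter_upwards [ae_restrict_of_ae (ae_tendsto_mollify_standardBump hψ.locallyIntegrable)]
      with x hx
    exact hx.inner tendsto_const_nhds

lemma ofReal_setIntegral_inner_le_of_forall_contDiff (hA : IsOpen A)
    (hF : IntegrableOn F A μ)
    (h : ∀ φ : E → H, ContDiff ℝ (⊤ : ℕ∞) φ → HasCompactSupport φ → tsupport φ ⊆ A →
      (∀ x, ‖φ x‖ ≤ 1) → ENNReal.ofReal (∫ x in A, inner ℝ (φ x) (F x) ∂μ) ≤ a)
    (hK : IsCompact K) (hKA : K ⊆ A) (hψ : Integrable ψ μ) (hψK : Function.support ψ ⊆ K)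
    (hψ_norm : ∀ x, ‖ψ x‖ ≤ 1) :
    ENNReal.ofReal (∫ x in A, inner ℝ (ψ x) (F x) ∂μ) ≤ a := by
  obtain ⟨r, hr, hrA⟩ := hK.exists_cthickening_subset_open hA hKA
  refine le_of_tendsto (ENNReal.tendsto_ofReal (tendsto_setIntegral_inner_mollify hψ hψ_norm hF))
    ?_
  filter_upwards [(tendsto_standardBump_rOut (E := E)).eventually_le_const hr] with k hk
  have hsupp : tsupport (mollify (standardBump k) μ ψ) ⊆ cthickening r K :=
    closure_minimal ((mollify.support_subset _).trans <|
      (cthickening_subset_of_subset _ hψK).trans (cthickening_mono hk K)) isClosed_cthickening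
  exact h _ (mollify.contDiff _ hψ.locallyIntegrable)
    (hK.cthickening.of_isClosed_subset (isClosed_tsupport _) hsupp) (hsupp.trans hrA)
    (mollify.norm_le_of_forall_norm_le _ hψ_norm)

/- The test field is the normalisation of `F`, cut off outside `K` and mollified. -/
lemma setLIntegral_enorm_le_of_isCompact (hA : IsOpen A)
    (hF : IntegrableOn F A μ)
    (h : ∀ φ : E → H, ContDiff ℝ (⊤ : ℕ∞) φ → HasCompactSupport φ → tsupport φ ⊆ A →
      (∀ x, ‖φ x‖ ≤ 1) → ENNReal.ofReal (∫ x in A, inner ℝ (φ x) (F x) ∂μ) ≤ a)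
    (hK : IsCompact K) (hKA : K ⊆ A) : ∫⁻ x in K, ‖F x‖ₑ ∂μ ≤ a := by
  have hFK := hF.mono_set hKA
  set ψ : E → H := K.indicator fun x => NormedSpace.normalize (F x) with hψ
  have hψ_int : Integrable ψ μ := by
    refine (integrable_indicator_iff hK.measurableSet).2 (IntegrableOn.of_bound hK.measure_lt_top
      ?_ 1 (Eventually.of_forall fun x => norm_normalize_le_one _))
    exact hFK.1.norm.aemeasurable.inv.aestronglyMeasurable.smul hFK.1
  have hψ_norm (x : E) : ‖ψ x‖ ≤ 1 :=
    (norm_indicator_le_norm_self _ x).trans (norm_normalize_le_one _)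
  have hinner : (fun x => inner ℝ (ψ x) (F x)) = K.indicator fun x => ‖F x‖ := by
    ext x
    by_cases hx : x ∈ K
    · simp only [hψ, indicator_of_mem hx, inner_normalize_self]
    · simp only [hψ, indicator_of_notMem hx, inner_zero_left]
  have hbound := ofReal_setIntegral_inner_le_of_forall_contDiff hA hF h hK hKA hψ_int
    support_indicator_subset hψ_norm
  rwa [hinner, setIntegral_indicator hK.measurableSet, inter_eq_right.2 hKA,
    ofReal_integral_norm_eq_lintegral_enorm hFK] at hbound

lemma setLIntegral_enorm_le_of_forall_contDiff (hA : IsOpen A)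
    (hF : IntegrableOn F A μ)
    (h : ∀ φ : E → H, ContDiff ℝ (⊤ : ℕ∞) φ → HasCompactSupport φ → tsupport φ ⊆ A →
      (∀ x, ‖φ x‖ ≤ 1) → ENNReal.ofReal (∫ x in A, inner ℝ (φ x) (F x) ∂μ) ≤ a) :
    ∫⁻ x in A, ‖F x‖ₑ ∂μ ≤ a := by
  set ν := (μ.restrict A).withDensity fun x => ‖F x‖ₑ
  have hν {s : Set E} (hs : MeasurableSet s) (hsA : s ⊆ A) : ν s = ∫⁻ x in s, ‖F x‖ₑ ∂μ := by
    rw [withDensity_apply _ hs, Measure.restrict_restrict hs, inter_eq_left.2 hsA]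
  have : IsFiniteMeasure ν := isFiniteMeasure_withDensity hF.2.ne
  rw [← hν hA.measurableSet subset_rfl, hA.measure_eq_iSup_isCompact]
  refine iSup₂_le fun K hKA => iSup_le fun hK => ?_
  rw [hν hK.measurableSet hKA]
  exact setLIntegral_enorm_le_of_isCompact hA hF h hK hKA

end Duality

section LowerBound

variable {Ω A : Set R2} {u w : R2 → R2} {G M : R2 → Matrix (Fin 2) (Fin 2) ℝ}
  {φ : R2 → EuclideanSpace ℝ (Option (Fin 2 × Fin 2))}

lemma inner_graphVec (y : EuclideanSpace ℝ (Option (Fin 2 × Fin 2)))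
    (M : Matrix (Fin 2) (Fin 2) ℝ) :
    inner ℝ y (graphVec M) = y none + ∑ i, ∑ j, M i j * y (some (i, j)) := by
  simp [PiLp.inner_apply, graphVec, Fintype.sum_option, Fintype.sum_prod_type]

lemma ofReal_integral_le_lintegral_ofReal {α : Type*} [MeasurableSpace α] {μ : Measure α}
    {f : α → ℝ} (hf : Integrable f μ) :
    ENNReal.ofReal (∫ x, f x ∂μ) ≤ ∫⁻ x, ENNReal.ofReal (f x) ∂μ := by
  rw [integral_eq_lintegral_pos_part_sub_lintegral_neg_part hf]
  exact (ENNReal.ofReal_le_ofReal (sub_le_self _ ENNReal.toReal_nonneg)).trans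
    ENNReal.ofReal_toReal_le

lemma ofReal_setIntegral_inner_graphVec_le_classicalArea (hφ_norm : ∀ x, ‖φ x‖ ≤ 1)
    (hint : IntegrableOn (fun x => inner ℝ (φ x) (graphVec (jacobianMatrix w x))) A) :
    ENNReal.ofReal (∫ x in A, inner ℝ (φ x) (graphVec (jacobianMatrix w x))) ≤
      classicalArea A w := by
  refine (ofReal_integral_le_lintegral_ofReal hint).trans
    (lintegral_mono fun x => ENNReal.ofReal_le_ofReal ?_)
  calc inner ℝ (φ x) (graphVec (jacobianMatrix w x))
      ≤ ‖φ x‖ * ‖graphVec (jacobianMatrix w x)‖ := real_inner_le_norm _ _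
    _ ≤ areaDensity (jacobianMatrix w x) := by
        rw [norm_graphVec]
        exact mul_le_of_le_one_left (Real.sqrt_nonneg _) (hφ_norm x)
    _ ≤ _ := Real.sqrt_le_sqrt (le_add_of_nonneg_right (sq_nonneg _))

/-- The pairing over `A` of a test field `φ` with the graph vector `(1, ∇w)`, integrated by parts so
that no derivative of `w` appears. -/
def graphPairing (A : Set R2) (φ : R2 → EuclideanSpace ℝ (Option (Fin 2 × Fin 2)))
    (w : R2 → R2) : ℝ :=
  (∫ x in A, φ x none) - ∑ i, ∑ j,
    ∫ x in A, w x i * fderiv ℝ (fun y => φ y (some (i, j))) x (EuclideanSpace.single j 1)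

lemma tsupport_piLp_apply_subset (o : Option (Fin 2 × Fin 2)) :
    tsupport (fun x => φ x o) ⊆ tsupport φ :=
  closure_mono fun x hx hφx => hx (by simp only [hφx, PiLp.zero_apply])

lemma hasCompactSupport_piLp_apply (hφc : HasCompactSupport φ) (o : Option (Fin 2 × Fin 2)) :
    HasCompactSupport fun x => φ x o :=
  hφc.of_isClosed_subset (isClosed_tsupport _) (tsupport_piLp_apply_subset o)

lemma integrable_piLp_apply (hφ : ContDiff ℝ (⊤ : ℕ∞) φ) (hφc : HasCompactSupport φ)
    (o : Option (Fin 2 × Fin 2)) : Integrable fun x => φ x o :=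
  (contDiff_euclidean.1 hφ o).continuous.integrable_of_hasCompactSupport
    (hasCompactSupport_piLp_apply hφc o)

lemma integrableOn_inner_graphVec (hφ : ContDiff ℝ (⊤ : ℕ∞) φ) (hφc : HasCompactSupport φ)
    (hM : ∀ i j, IntegrableOn (fun x => M x i j * φ x (some (i, j))) A) :
    IntegrableOn (fun x => inner ℝ (φ x) (graphVec (M x))) A := by
  simp only [inner_graphVec]
  exact (integrable_piLp_apply hφ hφc none).integrableOn.add
    (integrable_finsetSum _ fun i _ => integrable_finsetSum _ fun j _ => hM i j)

lemma IsWeakGradient.setIntegral_inner_graphVec (hw : IsWeakGradient A w M)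
    (hφ : ContDiff ℝ (⊤ : ℕ∞) φ) (hφc : HasCompactSupport φ) (hφA : tsupport φ ⊆ A)
    (hM : ∀ i j, IntegrableOn (fun x => M x i j * φ x (some (i, j))) A) :
    ∫ x in A, inner ℝ (φ x) (graphVec (M x)) = graphPairing A φ w := by
  simp only [inner_graphVec]
  rw [graphPairing, integral_add (integrable_piLp_apply hφ hφc none).integrableOn
    (integrable_finsetSum _ fun i _ => integrable_finsetSum _ fun j _ => hM i j),
    integral_finsetSum _ fun i _ => integrable_finsetSum _ fun j _ => hM i j, sub_eq_add_neg,
    ← Finset.sum_neg_distrib]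
  congr 1
  refine Finset.sum_congr rfl fun i _ => ?_
  rw [integral_finsetSum _ fun j _ => hM i j, ← Finset.sum_neg_distrib]
  refine Finset.sum_congr rfl fun j _ => ?_
  rw [hw _ (contDiff_euclidean.1 hφ _) (hasCompactSupport_piLp_apply hφc _)
    ((tsupport_piLp_apply_subset _).trans hφA), neg_neg]

lemma tendsto_integral_mul_of_tendsto_integral_norm_sub {α : Type*} [MeasurableSpace α]
    {μ : Measure α} {ι : Type*} {l : Filter ι} {f : ι → α → ℝ} {g d : α → ℝ} {C : ℝ}
    (hd : AEStronglyMeasurable d μ) (hdC : ∀ x, ‖d x‖ ≤ C) (hg : Integrable g μ)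
    (hf : ∀ k, Integrable (fun x => f k x - g x) μ)
    (hlim : Tendsto (fun k => ∫ x, ‖f k x - g x‖ ∂μ) l (𝓝 0)) :
    Tendsto (fun k => ∫ x, f k x * d x ∂μ) l (𝓝 (∫ x, g x * d x ∂μ)) := by
  have hC : ∀ᵐ x ∂μ, ‖d x‖ ≤ C := Eventually.of_forall hdC
  have hgd : Integrable (fun x => g x * d x) μ := hg.mul_bdd hd hC
  have hfd : ∀ k, Integrable (fun x => f k x * d x) μ := fun k => by
    simpa using ((hf k).add hg).mul_bdd hd hC
  rw [tendsto_iff_norm_sub_tendsto_zero]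
  refine squeeze_zero (fun _ => norm_nonneg _) (fun k => ?_) (by simpa using hlim.mul_const C)
  rw [← integral_sub (hfd k) hgd, ← integral_mul_const]
  refine norm_integral_le_of_norm_le ((hf k).norm.mul_const C) (Eventually.of_forall fun x => ?_)
  rw [← sub_mul, norm_mul]
  exact mul_le_mul_of_nonneg_left (hdC x) (norm_nonneg _)

lemma tendsto_graphPairing (hφ : ContDiff ℝ (⊤ : ℕ∞) φ) (hφc : HasCompactSupport φ)
    {v : ℕ → R2 → R2} (hu : IntegrableOn u A) (hv : ∀ k, IntegrableOn (fun x => v k x - u x) A)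
    (hlim : Tendsto (fun k => ∫ x in A, ‖v k x - u x‖) atTop (𝓝 0)) :
    Tendsto (fun k => graphPairing A φ (v k)) atTop (𝓝 (graphPairing A φ u)) := by
  refine tendsto_const_nhds.sub (tendsto_finsetSum _ fun i _ => tendsto_finsetSum _ fun j _ => ?_)
  have hcoord {f : R2 → R2} (hf : IntegrableOn f A) : IntegrableOn (fun x => f x i) A :=
    ContinuousLinearMap.integrable_comp (EuclideanSpace.proj i : R2 →L[ℝ] ℝ) hf.integrable
  have hderiv : Continuous fun x =>
      fderiv ℝ (fun y => φ y (some (i, j))) x (EuclideanSpace.single j 1) :=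
    ((contDiff_euclidean.1 hφ _).continuous_fderiv (by simp)).clm_apply continuous_const
  obtain ⟨C, hC⟩ :=
    ((hasCompactSupport_piLp_apply hφc (some (i, j))).fderiv_apply (𝕜 := ℝ)
      (EuclideanSpace.single j 1)).exists_bound_of_continuous hderiv
  refine tendsto_integral_mul_of_tendsto_integral_norm_sub hderiv.aestronglyMeasurable hC
    (hcoord hu) (fun k => hcoord (hv k)) (squeeze_zero (fun _ => by positivity) (fun k => ?_) hlim)
  exact integral_mono (hcoord (hv k)).norm (hv k).norm fun x => PiLp.norm_apply_le (v k x - u x) i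

lemma ofReal_setIntegral_inner_graphVec_le_liminf (hA : IsOpen A) (h : MemW11 A u G)
    (hφ : ContDiff ℝ (⊤ : ℕ∞) φ) (hφc : HasCompactSupport φ) (hφA : tsupport φ ⊆ A)
    (hφ_norm : ∀ x, ‖φ x‖ ≤ 1) {v : ℕ → R2 → R2} (hv : ∀ k, ContDiffOn ℝ 1 (v k) A)
    (hvu : ∀ k, IntegrableOn (fun x => v k x - u x) A)
    (hlim : Tendsto (fun k => ∫ x in A, ‖v k x - u x‖) atTop (𝓝 0)) :
    ENNReal.ofReal (∫ x in A, inner ℝ (φ x) (graphVec (G x))) ≤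
      liminf (fun k => classicalArea A (v k)) atTop := by
  have hφ_cont (o) : Continuous fun x => φ x o := (contDiff_euclidean.1 hφ o).continuous
  have hGφ (i j) : IntegrableOn (fun x => G x i j * φ x (some (i, j))) A :=
    (h.2.1 i j).mul_bdd (hφ_cont _).aestronglyMeasurable
      (Eventually.of_forall fun x => (PiLp.norm_apply_le (φ x) _).trans (hφ_norm x))
  have hvφ (k i j) : IntegrableOn (fun x => jacobianMatrix (v k) x i j * φ x (some (i, j))) A :=
    (integrable_mul_of_tsupport_subset hA (hφ_cont _) (hasCompactSupport_piLp_apply hφc _)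
      ((tsupport_piLp_apply_subset _).trans hφA)
      (continuousOn_jacobianMatrix hA (hv k) i j)).integrableOn
  have htendsto : Tendsto
      (fun k => ENNReal.ofReal (∫ x in A, inner ℝ (φ x) (graphVec (jacobianMatrix (v k) x))))
      atTop (𝓝 (ENNReal.ofReal (∫ x in A, inner ℝ (φ x) (graphVec (G x))))) := by
    simp only [h.2.2.setIntegral_inner_graphVec hφ hφc hφA hGφ,
      fun k => (isWeakGradient_jacobianMatrix hA (hv k)).setIntegral_inner_graphVec hφ hφc hφA
        (hvφ k)]
    exact ENNReal.tendsto_ofReal (tendsto_graphPairing hφ hφc h.1 hvu hlim)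
  rw [← htendsto.liminf_eq]
  exact liminf_le_liminf (Eventually.of_forall fun k =>
    ofReal_setIntegral_inner_graphVec_le_classicalArea hφ_norm
      (integrableOn_inner_graphVec hφ hφc (hvφ k)))

lemma areaMeasure_le_relaxedArea (h : MemW11 Ω u G) (hΩ : volume Ω ≠ ⊤) (hA : IsOpen A)
    (hAΩ : A ⊆ Ω) : areaMeasure Ω G A ≤ relaxedArea u A := by
  refine le_sInf ?_
  rintro a ⟨v, hv, hvu, hlim, rfl⟩
  simp only [areaMeasure_apply hA.measurableSet hAΩ, ← norm_graphVec, ofReal_norm]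
  exact setLIntegral_enorm_le_of_forall_contDiff hA ((h.integrableOn_graphVec hΩ).mono_set hAΩ)
    fun φ hφ hφc hφA hφ_norm => ofReal_setIntegral_inner_graphVec_le_liminf hA (h.mono hAΩ)
      hφ hφc hφA hφ_norm hv hvu hlim

lemma areaMeasure_le_envA (h : MemW11 Ω u G) (hΩ : volume Ω ≠ ⊤) (E : Set R2) :
    areaMeasure Ω G E ≤ envA u Ω E := by
  refine le_sInf ?_
  rintro a ⟨A, hA, hEA, rfl⟩
  calc areaMeasure Ω G E ≤ areaMeasure Ω G (⋃ k, A k) := measure_mono hEA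
    _ ≤ ∑' k, areaMeasure Ω G (A k) := measure_iUnion_le _
    _ ≤ ∑' k, relaxedArea u (A k) :=
        ENNReal.tsum_le_tsum fun k => areaMeasure_le_relaxedArea h hΩ (hA k).1 (hA k).2

end LowerBound

section Representation

variable {Ω A E : Set R2} {u v : R2 → R2} {G : R2 → Matrix (Fin 2) (Fin 2) ℝ}

lemma relaxedArea_congr (huv : u =ᵐ[volume.restrict A] v) : relaxedArea u A = relaxedArea v A := by
  have hsub (w : R2 → R2) : (fun x => w x - u x) =ᵐ[volume.restrict A] fun x => w x - v x := by
    filter_upwards [huv] with x hx using by rw [hx]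
  have hint (w : R2 → R2) : IntegrableOn (fun x => w x - u x) A ↔
      IntegrableOn (fun x => w x - v x) A := integrable_congr (hsub w)
  have hnorm (w : R2 → R2) : ∫ x in A, ‖w x - u x‖ = ∫ x in A, ‖w x - v x‖ :=
    integral_congr_ae ((hsub w).fun_comp norm)
  simp only [relaxedArea, hint, hnorm]

lemma envA_congr (huv : u =ᵐ[volume.restrict Ω] v) (E : Set R2) : envA u Ω E = envA v Ω E := by
  have htsum {A : ℕ → Set R2} (hA : ∀ k, IsOpen (A k) ∧ A k ⊆ Ω) :
      ∑' k, relaxedArea u (A k) = ∑' k, relaxedArea v (A k) :=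
    tsum_congr fun k => relaxedArea_congr (ae_restrict_of_ae_restrict_of_subset (hA k).2 huv)
  unfold envA
  congr 1 with a
  exact exists_congr fun A => and_congr_right fun hA => by rw [htsum hA]

lemma SphereValued.exists_measurable_ae_eq (hS : SphereValued Ω u)
    (hu : AEStronglyMeasurable u (volume.restrict Ω)) :
    ∃ v : R2 → R2, Measurable v ∧ (∀ x, ‖v x‖ = 1) ∧ u =ᵐ[volume.restrict Ω] v := by
  obtain ⟨v, hv, hv_range, huv⟩ := hu.aemeasurable.exists_ae_eq_range_subset
    (t := sphere 0 1) (by simpa [SphereValued] using hS) ⟨circlePoint 0, by simp [circlePoint]⟩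
  exact ⟨v, hv, fun x => by simpa using hv_range (mem_range_self x), huv⟩

lemma envA_eq_areaMeasure (h : MemW11 Ω u G) (hΩ : IsOpen Ω) (hS : SphereValued Ω u)
    (hE : MeasurableSet E) (hEΩ : E ⊆ Ω) : envA u Ω E = areaMeasure Ω G E := by
  obtain ⟨v, hv, hv_norm, huv⟩ := hS.exists_measurable_ae_eq h.1.aestronglyMeasurable
  have hvG : MemW11 Ω v G := h.congr huv
  rw [envA_congr huv]
  refine le_antisymm ?_ (areaMeasure_le_envA hvG (hS.volume_ne_top h.1) E)
  rw [envA_eq_envOuterMeasure]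
  exact envOuterMeasure_le_areaMeasure hvG hΩ hv hv_norm hE hEΩ

theorem envA_eq_integral_on_borel_general (hΩ : IsOpen Ω) (h : MemW11 Ω u G)
    (hS : SphereValued Ω u) (hE : MeasurableSet E) (hEΩ : E ⊆ Ω) :
    envA u Ω E = ENNReal.ofReal (∫ x in E, √(1 + ∑ i, ∑ j, (G x i j) ^ 2)) := by
  rw [envA_eq_areaMeasure h hΩ hS hE hEΩ, areaMeasure_apply hE hEΩ]
  exact (ofReal_integral_eq_lintegral_ofReal
    ((h.integrableOn_areaDensity (hS.volume_ne_top h.1)).mono_set hEΩ)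
    (Eventually.of_forall fun x => Real.sqrt_nonneg _)).symm

end Representation

/-- **Corollary (integral representation).** For `u ∈ W^{1,1}(Ω;S¹)` and every Borel
set `E ⊆ Ω`, `𝒜**(u,E) = ∫_E √(1+|∇u|²) dx`; in particular `𝒜**(u,·)` is a Borel
measure absolutely continuous with respect to Lebesgue measure. -/
theorem envA_eq_integral_on_borel (Ω : Set R2) (hΩo : IsOpen Ω)
    (hΩb : Bornology.IsBounded Ω) (hΩc : IsConnected Ω) (hΩl : HasLipschitzBoundary Ω)
    (u : R2 → R2) (G : R2 → Matrix (Fin 2) (Fin 2) ℝ)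
    (hu : MemW11 Ω u G) (hS : SphereValued Ω u) :
    ∀ E : Set R2, MeasurableSet E → E ⊆ Ω →
      envA u Ω E = ENNReal.ofReal (∫ x in E, Real.sqrt (1 + ∑ i, ∑ j, (G x i j) ^ 2)) :=
  fun _ hE hEΩ => envA_eq_integral_on_borel_general hΩo hu hS hE hEΩ
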